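/- arXiv:1301.0727 — 3 statements merged into one kernel-verified Lean document; each statement's English description precedes it below -/
import Mathlib

section
/- Fix a ∈ ℝ and let (Φ, W, Ψ, θ) be a solution of system (D) defined for all τ ∈ ℝ with Φ(τ) > 0 and θ(τ) ∈ (−π/2, π/2) for all τ. Suppose liminf_{τ→−∞} Φ(τ) < ∞ and limsup_{τ→−∞} ( Φ(τ) + |W(τ)| + |Ψ(τ)| ) = ∞. Then limsup_{τ→−∞} Φ(τ) = ∞. -/
open Filter Set

/-- The right-hand side of the `Ψ` equation in system (D). -/
noncomputable def dPsi (a Φ W Ψ θ : ℝ) : ℝ :=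
  1 / Φ ^ 3 - 1 - (a - 1) * Real.cos θ ^ 2 -
    (((16 / 3) * Real.sin θ - (224 / 27) * Real.sin θ ^ 3) * Real.cos θ ^ ((17 : ℝ) / 3) * Φ
      + ((208 / 81) * Real.sin θ ^ 2 - 10 / 9) * Real.cos θ ^ ((34 : ℝ) / 9) * W
      + (2 / 3) * Real.sin θ * Real.cos θ ^ ((17 : ℝ) / 9) * Ψ)

/-- `(Φ, W, Ψ, θ)` is a solution of system (D) on all of `ℝ`. -/
noncomputable def SolD (a : ℝ) (Φ W Ψ θ : ℝ → ℝ) : Prop :=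
  ∀ τ : ℝ,
    HasDerivAt Φ (W τ) τ ∧
    HasDerivAt W (Ψ τ) τ ∧
    HasDerivAt Ψ (dPsi a (Φ τ) (W τ) (Ψ τ) (θ τ)) τ ∧
    HasDerivAt θ (Real.cos (θ τ) ^ ((26 : ℝ) / 9)) τ

lemma mvt_aux (f f' : ℝ → ℝ) (h : ∀ t, HasDerivAt f (f' t) t) (u v : ℝ) (huv : u < v) :
    ∃ ξ, u < ξ ∧ ξ < v ∧ f' ξ * (v - u) = f v - f u := by
  obtain ⟨ξ, hξ, he⟩ := exists_hasDerivAt_eq_slope f f' huv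
    (fun x _ => (h x).continuousAt.continuousWithinAt) (fun x _ => h x)
  refine ⟨ξ, hξ.1, hξ.2, ?_⟩
  rw [he]
  have : v - u ≠ 0 := by linarith
  field_simp

lemma slope_small (Φ Y b : ℝ → ℝ) (M B T : ℝ)
    (hΦ : ∀ t, HasDerivAt Φ (Y t + b t) t) (h0 : ∀ t ≤ T, 0 ≤ Φ t) (h1 : ∀ t ≤ T, Φ t ≤ M)
    (hb : ∀ t ≤ T, |b t| ≤ B) (u : ℝ) (hu : u + 1/3 ≤ T) :
    ∃ ξ, u < ξ ∧ ξ < u + 1/3 ∧ |Y ξ| ≤ 3 * M + B := by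
  obtain ⟨ξ, h2, h3, h4⟩ := mvt_aux Φ _ hΦ u (u + 1/3) (by linarith)
  refine ⟨ξ, h2, h3, ?_⟩
  have := h0 u (by linarith)
  have := h0 _ hu
  have := h1 u (by linarith)
  have := h1 _ hu
  have := abs_le.1 (hb ξ (by linarith))
  rw [abs_le]; constructor <;> linarith

lemma exists_small (Φ Y Z b c : ℝ → ℝ) (M B T : ℝ)
    (hΦ : ∀ t, HasDerivAt Φ (Y t + b t) t) (hY : ∀ t, HasDerivAt Y (Z t + c t) t)
    (h0 : ∀ t ≤ T, 0 ≤ Φ t) (h1 : ∀ t ≤ T, Φ t ≤ M)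
    (hb : ∀ t ≤ T, |b t| ≤ B) (hc : ∀ t ≤ T, |c t| ≤ B) (u : ℝ) (hu : u + 1 ≤ T) :
    ∃ η, u < η ∧ η < u + 1 ∧ |Z η| ≤ 18 * M + 7 * B := by
  obtain ⟨x, hx1, hx2, hx3⟩ := slope_small Φ Y b M B T hΦ h0 h1 hb u (by linarith)
  obtain ⟨y, hy1, hy2, hy3⟩ := slope_small Φ Y b M B T hΦ h0 h1 hb (u + 2/3) (by linarith)
  obtain ⟨η, h2, h3, h4⟩ := mvt_aux Y _ hY x y (by linarith)
  refine ⟨η, by linarith, by linarith, ?_⟩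
  have hc' := hc η (by linarith)
  have h5 : |Z η + c η| * (y - x) ≤ 6 * M + 2 * B := by
    rw [← abs_of_pos (show 0 < y - x by linarith), ← abs_mul, h4]
    have := abs_sub (Y y) (Y x)
    linarith
  have h6 : |Z η + c η| * (1/3) ≤ |Z η + c η| * (y - x) :=
    mul_le_mul_of_nonneg_left (by linarith) (abs_nonneg _)
  have h7 : |Z η| ≤ |Z η + c η| + |c η| := by
    have := abs_sub (Z η + c η) (c η)
    simpa using this
  linarith

lemma Z_bound (Φ Y Z b c d : ℝ → ℝ) (M B T : ℝ)
    (hΦ : ∀ t, HasDerivAt Φ (Y t + b t) t) (hY : ∀ t, HasDerivAt Y (Z t + c t) t)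
    (hZ : ∀ t, HasDerivAt Z (d t) t) (hB : 0 ≤ B)
    (h0 : ∀ t ≤ T, 0 ≤ Φ t) (h1 : ∀ t ≤ T, Φ t ≤ M)
    (hb : ∀ t ≤ T, |b t| ≤ B) (hc : ∀ t ≤ T, |c t| ≤ B) (hd : ∀ t ≤ T, -B ≤ d t)
    (u : ℝ) (hu : u + 1 ≤ T) :
    |Z u| ≤ 18 * M + 8 * B := by
  have key : ∀ x y, x < y → y ≤ x + 1 → y ≤ T → Z x ≤ Z y + B := by
    intro x y hxy hy hT
    obtain ⟨ξ, h2, h3, h4⟩ := mvt_aux Z d hZ x y hxy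
    have := hd ξ (by linarith)
    nlinarith
  obtain ⟨x, hx1, hx2, hx3⟩ :=
    exists_small Φ Y Z b c M B T hΦ hY h0 h1 hb hc u hu
  obtain ⟨y, hy1, hy2, hy3⟩ :=
    exists_small Φ Y Z b c M B T hΦ hY h0 h1 hb hc (u - 1) (by linarith)
  have k1 := key u x hx1 (by linarith) (by linarith)
  have k2 := key y u (by linarith) (by linarith) (by linarith)
  rw [abs_le] at *
  constructor <;> linarith

lemma Y_bound (Φ Y Z b c d : ℝ → ℝ) (M B T : ℝ)
    (hΦ : ∀ t, HasDerivAt Φ (Y t + b t) t) (hY : ∀ t, HasDerivAt Y (Z t + c t) t)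
    (hZ : ∀ t, HasDerivAt Z (d t) t) (hB : 0 ≤ B)
    (h0 : ∀ t ≤ T, 0 ≤ Φ t) (h1 : ∀ t ≤ T, Φ t ≤ M)
    (hb : ∀ t ≤ T, |b t| ≤ B) (hc : ∀ t ≤ T, |c t| ≤ B) (hd : ∀ t ≤ T, -B ≤ d t)
    (u : ℝ) (hu : u + 2 ≤ T) :
    |Y u| ≤ 21 * M + 10 * B := by
  obtain ⟨x, hx1, hx2, hx3⟩ := slope_small Φ Y b M B T hΦ h0 h1 hb u (by linarith)
  obtain ⟨ξ, h2, h3, h4⟩ := mvt_aux Y _ hY u x hx1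
  have hz := Z_bound Φ Y Z b c d M B T hΦ hY hZ hB h0 h1 hb hc hd ξ (by linarith)
  have hcc := hc ξ (by linarith)
  have h5 : |Z ξ + c ξ| ≤ 18 * M + 9 * B := (abs_add_le _ _).trans (by linarith)
  have h6 : |Y x - Y u| ≤ 18 * M + 9 * B := by
    rw [← h4, abs_mul, abs_of_pos (show 0 < x - u by linarith)]
    nlinarith [abs_nonneg (Z ξ + c ξ)]
  rw [abs_le] at *
  constructor <;> linarith

/-- coefficient of the second derivative, and friends -/
noncomputable def gam (x : ℝ) : ℝ := (2 / 3) * Real.sin x * Real.cos x ^ ((17 : ℝ) / 9)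
noncomputable def gam1 (x : ℝ) : ℝ :=
  Real.cos x ^ ((34 : ℝ) / 9) * (52 / 27 * Real.cos x ^ 2 - 34 / 27)
noncomputable def del (x : ℝ) : ℝ :=
  Real.cos x ^ ((34 : ℝ) / 9) * (220 / 81 - 364 / 81 * Real.cos x ^ 2)
noncomputable def del1 (x : ℝ) : ℝ :=
  (-Real.sin x * Real.cos x ^ ((26 : ℝ) / 9)) *
   ((34 / 9) * Real.cos x ^ ((25 : ℝ) / 9) * (220 / 81 - 364 / 81 * Real.cos x ^ 2)
    - Real.cos x ^ ((34 : ℝ) / 9) * (728 / 81 * Real.cos x))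

lemma gam_deriv (θ : ℝ → ℝ) (t : ℝ) (hc : 0 < Real.cos (θ t))
    (h : HasDerivAt θ (Real.cos (θ t) ^ ((26 : ℝ) / 9)) t) :
    HasDerivAt (fun s => gam (θ s)) (gam1 (θ t)) t := by
  have h1 := (h.sin.const_mul (2/3 : ℝ)).mul (h.cos.rpow_const (p := (17 : ℝ) / 9) (Or.inl hc.ne'))
  refine h1.congr_deriv ?_
  unfold gam1
  have e1 : Real.cos (θ t) ^ ((34 : ℝ) / 9)
      = Real.cos (θ t) ^ ((26 : ℝ) / 9) * Real.cos (θ t) ^ ((17 : ℝ) / 9 - 1) := by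
    rw [← Real.rpow_add hc]; norm_num
  have e2 : Real.cos (θ t) ^ ((17 : ℝ) / 9)
      = Real.cos (θ t) ^ ((17 : ℝ) / 9 - 1) * Real.cos (θ t) := by
    rw [Real.rpow_sub_one hc.ne']; field_simp
  rw [e1, e2]
  have hs := Real.sin_sq (θ t)
  linear_combination (-(2/3) * (17/9) * Real.cos (θ t) ^ ((26 : ℝ) / 9) *
    Real.cos (θ t) ^ ((17 : ℝ) / 9 - 1)) * hs

lemma del_deriv (θ : ℝ → ℝ) (t : ℝ) (hc : 0 < Real.cos (θ t))
    (h : HasDerivAt θ (Real.cos (θ t) ^ ((26 : ℝ) / 9)) t) :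
    HasDerivAt (fun s => del (θ s)) (del1 (θ t)) t := by
  have h1 := (h.cos.rpow_const (p := (34 : ℝ) / 9) (Or.inl hc.ne')).mul
    (((h.cos.pow 2).const_mul (364 / 81 : ℝ)).const_sub (220 / 81 : ℝ))
  refine h1.congr_deriv ?_
  unfold del1
  rw [show (34 : ℝ) / 9 - 1 = 25 / 9 by norm_num]
  simp only [Pi.pow_apply]
  push_cast
  ring

lemma pw (x p : ℝ) (hc : 0 < Real.cos x) (hp : 0 ≤ p) : |Real.cos x ^ p| ≤ 1 := by
  rw [abs_of_nonneg (Real.rpow_nonneg hc.le _)]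
  exact Real.rpow_le_one hc.le (Real.cos_le_one x) hp

lemma mul_b {x y A B : ℝ} (hx : |x| ≤ A) (hy : |y| ≤ B) : |x * y| ≤ A * B := by
  rw [abs_mul]
  exact mul_le_mul hx hy (abs_nonneg _) ((abs_nonneg _).trans hx)

lemma gam_b (x : ℝ) (hc : 0 < Real.cos x) : |gam x| ≤ 100 := by
  have := mul_b (mul_b (le_refl |(2/3 : ℝ)|) (Real.abs_sin_le_one x))
    (pw x (17/9) hc (by norm_num))
  unfold gam
  refine this.trans ?_
  norm_num [abs_of_pos]

lemma quad_b (x p q : ℝ) : |p * Real.cos x ^ 2 + q| ≤ |p| + |q| := by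
  refine (abs_add_le _ _).trans ?_
  have : |Real.cos x ^ 2| ≤ 1 := by
    rw [abs_of_nonneg (sq_nonneg _)]; exact Real.cos_sq_le_one x
  have := mul_b (le_refl |p|) this
  linarith

lemma gam1_b (x : ℝ) (hc : 0 < Real.cos x) : |gam1 x| ≤ 100 := by
  have := mul_b (pw x (34/9) hc (by norm_num)) (quad_b x (52/27) (-(34/27)))
  unfold gam1
  rw [sub_eq_add_neg]
  refine this.trans ?_
  norm_num [abs_of_pos]

lemma quad2_b (x : ℝ) : |220 / 81 - 364 / 81 * Real.cos x ^ 2| ≤ 8 := by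
  have := quad_b x (-(364/81)) (220/81)
  rw [show 220 / 81 - 364 / 81 * Real.cos x ^ 2 = -(364/81) * Real.cos x ^ 2 + 220/81 by ring]
  refine this.trans ?_
  norm_num [abs_of_pos]

lemma del_b (x : ℝ) (hc : 0 < Real.cos x) : |del x| ≤ 100 := by
  have := mul_b (pw x (34/9) hc (by norm_num)) (quad2_b x)
  unfold del
  exact this.trans (by norm_num)

lemma del1_b (x : ℝ) (hc : 0 < Real.cos x) : |del1 x| ≤ 100 := by
  have a1 := mul_b (mul_b (le_of_eq (abs_of_pos (show (0:ℝ) < 34/9 by norm_num)))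
    (pw x (25/9) hc (by norm_num))) (quad2_b x)
  have a2 := mul_b (pw x (34/9) hc (by norm_num))
    (mul_b (le_of_eq (abs_of_pos (show (0:ℝ) < 728/81 by norm_num))) (Real.abs_cos_le_one x))
  have a3 : |-Real.sin x| ≤ 1 := by rw [abs_neg]; exact Real.abs_sin_le_one x
  have := mul_b (mul_b a3 (pw x (26/9) hc (by norm_num))) ((abs_sub _ _).trans (add_le_add a1 a2))
  unfold del1
  exact this.trans (by norm_num)

lemma alp_b (x : ℝ) (hc : 0 < Real.cos x) :
    |((16 / 3) * Real.sin x - (224 / 27) * Real.sin x ^ 3) * Real.cos x ^ ((17 : ℝ) / 3)| ≤ 100 := by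
  have s := Real.abs_sin_le_one x
  have s3 : |Real.sin x ^ 3| ≤ 1 := by rw [abs_pow]; exact pow_le_one₀ (abs_nonneg _) s
  have a1 := mul_b (le_of_eq (abs_of_pos (show (0:ℝ) < 16/3 by norm_num))) s
  have a2 := mul_b (le_of_eq (abs_of_pos (show (0:ℝ) < 224/27 by norm_num))) s3
  have := mul_b ((abs_sub _ _).trans (add_le_add a1 a2)) (pw x (17/3) hc (by norm_num))
  exact this.trans (by norm_num)

lemma bet_eq (x : ℝ) :
    ((208 / 81) * Real.sin x ^ 2 - 10 / 9) * Real.cos x ^ ((34 : ℝ) / 9) = del x + gam1 x := by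
  unfold del gam1
  rw [Real.sin_sq]; ring

lemma main_bound (a : ℝ) (Φ W Ψ θ : ℝ → ℝ)
    (hsol : SolD a Φ W Ψ θ)
    (hΦpos : ∀ τ : ℝ, 0 < Φ τ)
    (hθ : ∀ τ : ℝ, θ τ ∈ Set.Ioo (-(Real.pi / 2)) (Real.pi / 2))
    (M T : ℝ) (hM : ∀ t ≤ T, Φ t ≤ M) :
    ∃ C : ℝ, ∀ t ≤ T - 2, Φ t + |W t| + |Ψ t| ≤ C := by
  have hc : ∀ t, 0 < Real.cos (θ t) := fun t => Real.cos_pos_of_mem_Ioo (hθ t)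
  have hM0 : 0 ≤ M := (hΦpos T).le.trans (hM T le_rfl)
  set B : ℝ := 200 * M + 1 + |a - 1| with hBdef
  have hB : 0 ≤ B := by positivity
  have habsΦ : ∀ t ≤ T, |Φ t| ≤ M := fun t ht => by
    rw [abs_of_pos (hΦpos t)]; exact hM t ht
  let Y : ℝ → ℝ := fun t => W t + gam (θ t) * Φ t
  let Z : ℝ → ℝ := fun t => Ψ t + gam (θ t) * W t + del (θ t) * Φ t
  let b : ℝ → ℝ := fun t => -(gam (θ t) * Φ t)
  let c : ℝ → ℝ := fun t => (gam1 (θ t) - del (θ t)) * Φ t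
  let d : ℝ → ℝ := fun t => 1 / Φ t ^ 3 - 1 - (a - 1) * Real.cos (θ t) ^ 2
    - (((16 / 3) * Real.sin (θ t) - (224 / 27) * Real.sin (θ t) ^ 3)
      * Real.cos (θ t) ^ ((17 : ℝ) / 3)) * Φ t + del1 (θ t) * Φ t
  have dg := fun t => gam_deriv θ t (hc t) (hsol t).2.2.2
  have dd := fun t => del_deriv θ t (hc t) (hsol t).2.2.2
  have hΦ' : ∀ t, HasDerivAt Φ (Y t + b t) t := fun t => by
    refine (hsol t).1.congr_deriv ?_
    simp only [Y, b]; ring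
  have hY' : ∀ t, HasDerivAt Y (Z t + c t) t := fun t => by
    refine ((hsol t).2.1.add ((dg t).mul (hsol t).1)).congr_deriv ?_
    simp only [Z, c]; ring
  have hZ' : ∀ t, HasDerivAt Z (d t) t := fun t => by
    refine (((hsol t).2.2.1.add ((dg t).mul (hsol t).2.1)).add
      ((dd t).mul (hsol t).1)).congr_deriv ?_
    simp only [d, dPsi]
    rw [bet_eq]
    unfold gam
    ring
  have hb : ∀ t ≤ T, |b t| ≤ B := fun t ht => by
    have := mul_b (gam_b _ (hc t)) (habsΦ t ht)
    simp only [b, abs_neg]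
    have := abs_nonneg (a - 1)
    linarith
  have hcb : ∀ t ≤ T, |c t| ≤ B := fun t ht => by
    have := mul_b ((abs_sub _ _).trans (add_le_add (gam1_b _ (hc t)) (del_b _ (hc t)))) (habsΦ t ht)
    simp only [c]
    have := abs_nonneg (a - 1)
    linarith
  have hd : ∀ t ≤ T, -B ≤ d t := fun t ht => by
    have h1 := abs_le.1 (mul_b (alp_b _ (hc t)) (habsΦ t ht))
    have h2 := abs_le.1 (mul_b (del1_b _ (hc t)) (habsΦ t ht))
    have h3 : |Real.cos (θ t) ^ 2| ≤ 1 := by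
      rw [abs_of_nonneg (sq_nonneg _)]; exact Real.cos_sq_le_one _
    have h4 := abs_le.1 (mul_b (le_refl |a - 1|) h3)
    have h5 : 0 < 1 / Φ t ^ 3 := by have := hΦpos t; positivity
    simp only [d]
    linarith [h1.2, h2.1, h4.2]
  have h0 : ∀ t ≤ T, 0 ≤ Φ t := fun t _ => (hΦpos t).le
  set K := 21 * M + 10 * B + 100 * M with hK
  refine ⟨M + K + (18 * M + 8 * B + 100 * K + 100 * M), fun t ht => ?_⟩
  have hYb : |Y t| ≤ _ := Y_bound Φ Y Z b c d M B T hΦ' hY' hZ' hB h0 hM hb hcb hd t (by linarith)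
  have hZb : |Z t| ≤ _ := Z_bound Φ Y Z b c d M B T hΦ' hY' hZ' hB h0 hM hb hcb hd t (by linarith)
  have hT : t ≤ T := by linarith
  have g1 := mul_b (gam_b _ (hc t)) (habsΦ t hT)
  have hW : |W t| ≤ K := by
    have : W t = Y t - gam (θ t) * Φ t := by simp only [Y]; ring
    rw [this]
    exact (abs_sub _ _).trans (by linarith)
  have g2 := mul_b (gam_b _ (hc t)) hW
  have g3 := mul_b (del_b _ (hc t)) (habsΦ t hT)
  have hP : |Ψ t| ≤ 18 * M + 8 * B + 100 * K + 100 * M := by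
    have : Ψ t = Z t - gam (θ t) * W t - del (θ t) * Φ t := by simp only [Z]; ring
    rw [this]
    exact (abs_sub _ _).trans (add_le_add ((abs_sub _ _).trans (add_le_add hZb g2)) g3)
  have := hM t hT
  linarith

/-- `limsup_{τ→-∞} Φ = ∞`. -/
theorem limsup_top (a : ℝ) (Φ W Ψ θ : ℝ → ℝ)
    (hsol : SolD a Φ W Ψ θ)
    (hΦpos : ∀ τ : ℝ, 0 < Φ τ)
    (hθ : ∀ τ : ℝ, θ τ ∈ Set.Ioo (-(Real.pi / 2)) (Real.pi / 2))
    (hliminf : Filter.liminf (fun τ : ℝ => ((Φ τ : ℝ) : EReal)) atBot < ⊤)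
    (hlimsup : Filter.limsup (fun τ : ℝ => ((Φ τ + |W τ| + |Ψ τ| : ℝ) : EReal)) atBot = ⊤) :
    Filter.limsup (fun τ : ℝ => ((Φ τ : ℝ) : EReal)) atBot = ⊤ := by
  by_contra hne
  obtain ⟨M, hM1, hM2⟩ := EReal.lt_iff_exists_real_btwn.1 (lt_top_iff_ne_top.2 hne)
  have hev := Filter.eventually_lt_of_limsup_lt hM1
  obtain ⟨T, hT⟩ := Filter.eventually_atBot.1 hev
  obtain ⟨C, hC⟩ := main_bound a Φ W Ψ θ hsol hΦpos hθ M T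
    (fun t ht => (EReal.coe_lt_coe_iff.1 (hT t ht)).le)
  have hle : Filter.limsup (fun τ : ℝ => ((Φ τ + |W τ| + |Ψ τ| : ℝ) : EReal)) atBot ≤ (C : EReal) := by
    refine Filter.limsup_le_of_le (by isBoundedDefault) ?_
    refine Filter.eventually_atBot.2 ⟨T - 2, fun t ht => ?_⟩
    exact EReal.coe_le_coe_iff.2 (hC t ht)
  rw [hlimsup] at hle
  exact absurd hle (not_le.2 (EReal.coe_lt_top C))
end

section
/- Fix a ∈ ℝ. There exist constants C₁ > 0 and C₂ > 0, depending only on a, with the following property: for every solution (Φ, W, Ψ, θ) of system (D) defined on all of ℝ with Φ(τ) > 0 for all τ, satisfying (Φ(τ), W(τ), Ψ(τ), θ(τ)) → (1, 0, 0, π/2) as τ → +∞, θ(τ) → −π/2 as τ → −∞, and liminf_{τ→−∞} Φ(τ) < ∞, one has limsup_{τ→−∞} ( Φ(τ) + |W(τ)| + |Ψ(τ)| ) ≤ C₁ and liminf_{τ→−∞} Φ(τ) ≥ C₂. -/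
open Filter Set

lemma mono_aux {f f' : ℝ → ℝ} {a b : ℝ} (hab : a ≤ b)
    (hd : ∀ x ∈ Icc a b, HasDerivAt f (f' x) x) (h : ∀ x ∈ Ioo a b, 0 ≤ f' x) : f a ≤ f b := by
  have hm : MonotoneOn f (Icc a b) := by
    apply monotoneOn_of_deriv_nonneg (convex_Icc a b)
    · exact fun x hx => (hd x hx).continuousAt.continuousWithinAt
    · intro x hx
      rw [interior_Icc] at hx
      exact (hd x (Ioo_subset_Icc_self hx)).differentiableAt.differentiableWithinAt
    · intro x hx
      rw [interior_Icc] at hx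
      rw [(hd x (Ioo_subset_Icc_self hx)).deriv]
      exact h x hx
  exact hm (left_mem_Icc.2 hab) (right_mem_Icc.2 hab) hab

lemma anti_aux {f f' : ℝ → ℝ} {a b : ℝ} (hab : a ≤ b)
    (hd : ∀ x ∈ Icc a b, HasDerivAt f (f' x) x) (h : ∀ x ∈ Ioo a b, f' x ≤ 0) : f b ≤ f a := by
  have := mono_aux (f := fun x => - f x) (f' := fun x => - f' x) hab
    (fun x hx => (hd x hx).neg) (fun x hx => by linarith [h x hx])
  linarith

structure EtaSys (a x0 M0 : ℝ) (q H H1 H2 : ℝ → ℝ) : Prop where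
  hx0 : 1 ≤ x0
  qpos : ∀ x ≥ x0, 0 < q x
  qle : ∀ x ≥ x0, q x ≤ 1
  qg : ∀ x ≥ x0, q x ^ 3 * (x ^ 2 + a) = 1
  qr : ∀ x ≥ x0, |a * q x ^ 3| ≤ 1 / 100
  qd : ∀ x ≥ x0, HasDerivAt q (-(2 / 3) * x * q x ^ 4) x
  q0 : Tendsto q atTop (nhds 0)
  Hpos : ∀ x ≥ x0, 0 < H x
  dH : ∀ x ≥ x0, HasDerivAt H (H1 x) x
  dH1 : ∀ x ≥ x0, HasDerivAt H1 (H2 x) x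
  dH2 : ∀ x ≥ x0, HasDerivAt H2 (x ^ 2 + a - 1 / H x ^ 3) x
  fr : ∀ y, ∃ x ≥ y, H x ≤ M0 * q x

namespace EtaSys
variable {a x0 M0 : ℝ} {q H H1 H2 : ℝ → ℝ}

lemma gle (S : EtaSys a x0 M0 q H H1 H2) {x : ℝ} (hx : x0 ≤ x) :
    x ^ 2 + a ≤ 2 * x ^ 2 ∧ x ^ 2 / 2 ≤ x ^ 2 + a := by
  have h1 := S.qg x hx
  have h2 := abs_le.1 (S.qr x hx)
  have h3 : 0 < q x ^ 3 := pow_pos (S.qpos x hx) 3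
  constructor
  · by_contra hc
    push Not at hc
    nlinarith
  · by_contra hc
    push Not at hc
    nlinarith

lemma xq (S : EtaSys a x0 M0 q H H1 H2) {x : ℝ} (hx : x0 ≤ x) :
    x ^ 2 * q x ^ 3 ≤ 101/100 ∧ 99 / 100 ≤ x ^ 2 * q x ^ 3 := by
  have h1 := S.qg x hx
  have h2 := abs_le.1 (S.qr x hx)
  constructor <;> nlinarith

lemma qanti (S : EtaSys a x0 M0 q H H1 H2) {x y : ℝ} (hx : x0 ≤ x) (hxy : x ≤ y) : q y ≤ q x := by
  refine anti_aux hxy (fun t ht => S.qd t (hx.trans ht.1)) ?_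
  intro t ht
  have h1 : 0 < q t := S.qpos t (hx.trans ht.1.le)
  have h2 : 0 < t := by linarith [S.hx0, ht.1]
  have : 0 < t * q t ^ 4 := by positivity
  linarith

/-- `H''' ≥ 0` where `H ≥ q`. -/
lemma third_nonneg (S : EtaSys a x0 M0 q H H1 H2) {x : ℝ} (hx : x0 ≤ x) (h : q x ≤ H x) :
    0 ≤ x ^ 2 + a - 1 / H x ^ 3 := by
  have h1 := S.qg x hx
  have h3 : 0 < q x ^ 3 := pow_pos (S.qpos x hx) 3
  have h4 : q x ^ 3 ≤ H x ^ 3 := pow_le_pow_left₀ (S.qpos x hx).le h 3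
  have h5 : 1 / H x ^ 3 ≤ 1 / q x ^ 3 := one_div_le_one_div_of_le h3 h4
  have h6 : 1 / q x ^ 3 = x ^ 2 + a := by
    rw [div_eq_iff h3.ne']; linarith
  linarith

lemma third_big (S : EtaSys a x0 M0 q H H1 H2) {x : ℝ} (hx : x0 ≤ x) (h : 2 * q x ≤ H x) :
    x ^ 2 / 4 ≤ x ^ 2 + a - 1 / H x ^ 3 := by
  have h1 := S.qg x hx
  have h3 : 0 < q x ^ 3 := pow_pos (S.qpos x hx) 3
  have h4 : (2 * q x) ^ 3 ≤ H x ^ 3 :=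
    pow_le_pow_left₀ (by linarith [S.qpos x hx]) h 3
  have h5 : 1 / H x ^ 3 ≤ 1 / (2 * q x) ^ 3 := one_div_le_one_div_of_le (by nlinarith) h4
  have h6 : 1 / (2 * q x) ^ 3 = (x ^ 2 + a) / 8 := by
    rw [div_eq_iff (by nlinarith)]; nlinarith
  have := (S.gle hx).2
  nlinarith [sq_nonneg x]

lemma third_le (S : EtaSys a x0 M0 q H H1 H2) {x : ℝ} (hx : x0 ≤ x) :
    x ^ 2 + a - 1 / H x ^ 3 ≤ 2 * x ^ 2 := by
  have : 0 < 1 / H x ^ 3 := by have := S.Hpos x hx; positivity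
  linarith [(S.gle hx).1]

lemma third_neg (S : EtaSys a x0 M0 q H H1 H2) {x : ℝ} (hx : x0 ≤ x) (h : H x ≤ q x / 2) :
    x ^ 2 + a - 1 / H x ^ 3 ≤ -1 := by
  have h1 := S.qg x hx
  have h3 : 0 < H x ^ 3 := pow_pos (S.Hpos x hx) 3
  have h4 : H x ^ 3 ≤ (q x / 2) ^ 3 := pow_le_pow_left₀ (S.Hpos x hx).le h 3
  have h5 : 1 / (q x / 2) ^ 3 ≤ 1 / H x ^ 3 := one_div_le_one_div_of_le h3 h4
  have h3' : 0 < q x ^ 3 := pow_pos (S.qpos x hx) 3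
  have h6 : 1 / (q x / 2) ^ 3 = 8 * (x ^ 2 + a) := by
    rw [div_eq_iff (by nlinarith)]; nlinarith
  have := (S.gle hx).2
  have h1 : 1 ≤ x := S.hx0.trans hx
  nlinarith

lemma concave_rise (S : EtaSys a x0 M0 q H H1 H2) {x : ℝ} (hx : x0 ≤ x) (h : q x < H x)
    (h1 : 0 ≤ H1 x) : H2 x ≤ 0 := by
  by_contra hz
  push Not at hz
  have key : ∀ y, x ≤ y → (∀ s ∈ Ioo x y, q s < H s) → H x ≤ H y := by
    intro y hy hs
    have h2 : ∀ t ∈ Icc x y, 0 ≤ H2 t := by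
      intro t ht
      have := mono_aux (f := H2) ht.1 (fun s hs => S.dH2 s (hx.trans hs.1))
        (fun s hs' => S.third_nonneg (hx.trans hs'.1.le) (hs s ⟨hs'.1, hs'.2.trans_le ht.2⟩).le)
      linarith
    have h3 : ∀ t ∈ Icc x y, 0 ≤ H1 t := by
      intro t ht
      have := mono_aux (f := H1) ht.1 (fun s hs => S.dH1 s (hx.trans hs.1))
        (fun s hs' => h2 s ⟨hs'.1.le, hs'.2.le.trans ht.2⟩)
      linarith
    exact mono_aux (f := H) hy (fun s hs => S.dH s (hx.trans hs.1))
        (fun s hs' => h3 s ⟨hs'.1.le, hs'.2.le⟩)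
  have key2 : ∀ y, x ≤ y → q y < H y := by
    by_contra hc
    push Not at hc
    obtain ⟨y, hy, hq⟩ := hc
    have hcomp : IsCompact {s | s ∈ Icc x y ∧ H s - q s ≤ 0} := by
      apply isCompact_Icc.of_isClosed_subset _ (fun s hs => hs.1)
      have hc : ContinuousOn (fun s => H s - q s) (Icc x y) := fun s hs =>
        ((S.dH s (hx.trans hs.1)).continuousAt.sub
          (S.qd s (hx.trans hs.1)).continuousAt).continuousWithinAt
      exact hc.preimage_isClosed_of_isClosed isClosed_Icc isClosed_Iic
    obtain ⟨s, ⟨hs, hs'⟩, hmin⟩ := hcomp.exists_isLeast ⟨y, ⟨hy, le_rfl⟩, by linarith⟩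
    have := key s hs.1 (fun t ht => by
      by_contra hcc
      push Not at hcc
      have := hmin ⟨⟨ht.1.le, ht.2.le.trans hs.2⟩, by linarith⟩
      linarith [ht.2])
    have := S.qanti hx hs.1
    linarith
  have key3 : ∀ y, x ≤ y → H x ≤ H y := fun y hy => key y hy (fun s hs => key2 s hs.1.le)
  have hx0 := S.Hpos x hx
  have ht : Tendsto (fun y => M0 * q y) atTop (nhds 0) := by simpa using S.q0.const_mul M0
  obtain ⟨N, hN⟩ := eventually_atTop.1 (ht.eventually (gt_mem_nhds hx0))
  obtain ⟨y, hy, hy2⟩ := S.fr (max x N)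
  have := hN y ((le_max_right _ _).trans hy)
  have := key3 y ((le_max_left _ _).trans hy)
  linarith

lemma H2_le (S : EtaSys a x0 M0 q H H1 H2) : ∃ C > 0, ∀ x ≥ x0, H2 x ≤ C * x ^ 3 := by
  refine ⟨|H2 x0| + 1, by positivity, fun x hx => ?_⟩
  have h := anti_aux (f := fun x => H2 x - x ^ 3)
    (f' := fun x => (x ^ 2 + a - 1 / H x ^ 3) - 3 * x ^ 2) hx
    (fun s hs => by
      have := (S.dH2 s hs.1).sub (hasDerivAt_pow 3 s)
      exact this.congr_deriv (by norm_num))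
    (fun s hs => by have := S.third_le hs.1.le; nlinarith [sq_nonneg s])
  have h1 : 1 ≤ x := S.hx0.trans hx
  have h2 : 1 ≤ x ^ 3 := one_le_pow₀ h1
  have h3 : 0 ≤ x0 ^ 3 := by have := S.hx0; positivity
  nlinarith [abs_nonneg (H2 x0), le_abs_self (H2 x0)]

set_option maxHeartbeats 1000000 in
lemma H_le (S : EtaSys a x0 M0 q H H1 H2) : ∃ K > 0, ∀ x ≥ x0, H x ≤ K * x ^ 2 := by
  obtain ⟨C, hC, hC2⟩ := S.H2_le
  have hx0 := S.hx0
  set P := |H1 x0| with hP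
  have hP0 : 0 ≤ P := abs_nonneg _
  set C' := P ^ 2 + 4 * C with hC'
  have hC'0 : 0 < C' := by positivity
  set K := 2 + 64 * (C' + 1) + P + H x0 with hK
  have hH0 := S.Hpos x0 le_rfl
  have hK1 : 66 < K := by linarith
  refine ⟨K, by linarith, ?_⟩
  by_contra hc
  push Not at hc
  obtain ⟨y, hy, hyK⟩ := hc
  have hcomp : IsCompact {s | s ∈ Icc x0 y ∧ K * s ^ 2 - H s ≤ 0} := by
    apply isCompact_Icc.of_isClosed_subset _ (fun s hs => hs.1)
    have hc : ContinuousOn (fun s => K * s ^ 2 - H s) (Icc x0 y) := fun s hs =>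
      (((continuous_pow 2).const_mul K |>.continuousAt).sub
        (S.dH s hs.1).continuousAt).continuousWithinAt
    exact hc.preimage_isClosed_of_isClosed isClosed_Icc isClosed_Iic
  obtain ⟨b, ⟨hb, hb'⟩, hmin⟩ := hcomp.exists_isLeast ⟨y, ⟨hy, le_rfl⟩, by linarith⟩
  have hlt : ∀ s, x0 ≤ s → s < b → H s < K * s ^ 2 := by
    intro s hs hsb
    by_contra hcc
    push Not at hcc
    have := hmin ⟨⟨hs, hsb.le.trans hb.2⟩, by linarith⟩
    linarith
  have hx0b : x0 < b := by
    rcases hb.1.eq_or_lt with h | h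
    · rw [← h] at hb'
      have : 1 ≤ x0 ^ 2 := one_le_pow₀ hx0
      have : K * 1 ≤ K * x0 ^ 2 := by gcongr
      linarith
    · exact h
  have hb1 : 1 < b := by linarith
  -- derivative at `b`
  have hH1b : 2 * K * b ≤ H1 b := by
    by_contra hcc
    push Not at hcc
    have hcont : ContinuousAt (fun s => 2 * K * s - H1 s) b :=
      (continuous_const.mul continuous_id).continuousAt.sub (S.dH1 b hb.1).continuousAt
    have hev : ∀ᶠ s in nhds b, 0 < 2 * K * s - H1 s :=
      hcont.eventually (lt_mem_nhds (by linarith))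
    obtain ⟨ε, hε, hball⟩ := Metric.eventually_nhds_iff.1 hev
    set c := max x0 (b - ε / 2) with hc
    have hcb : c < b := max_lt hx0b (by linarith)
    have := mono_aux (f := fun s => K * s ^ 2 - H s) (f' := fun s => 2 * K * s - H1 s) hcb.le
      (fun s hs => by
        have := ((hasDerivAt_pow 2 s).const_mul K).sub (S.dH s ((le_max_left _ _).trans hs.1))
        exact this.congr_deriv (by simp; ring))
      (fun s hs => by
        refine (hball ?_).le
        have h1 : b - ε / 2 < s := (le_max_right _ _).trans_lt hs.1
        rw [Real.dist_eq, abs_lt]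
        constructor <;> linarith [hs.2])
    linarith [hlt c (le_max_left _ _) hcb]
  have hPb : P < H1 b := by nlinarith
  -- last point with `H1 ≤ P`
  have hcomp2 : IsCompact {s | s ∈ Icc x0 b ∧ H1 s ≤ P} := by
    apply isCompact_Icc.of_isClosed_subset _ (fun s hs => hs.1)
    have hc : ContinuousOn H1 (Icc x0 b) := fun s hs => (S.dH1 s hs.1).continuousAt.continuousWithinAt
    exact hc.preimage_isClosed_of_isClosed isClosed_Icc isClosed_Iic
  obtain ⟨m, ⟨hm, hmP⟩, hmax⟩ := hcomp2.exists_isGreatest ⟨x0, ⟨le_rfl, hx0b.le⟩, le_abs_self _⟩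
  have hgt : ∀ s, m < s → s ≤ b → P < H1 s := by
    intro s hs hsb
    by_contra hcc
    push Not at hcc
    have := hmax ⟨⟨hm.1.trans hs.le, hsb⟩, hcc⟩
    linarith
  have hmb : m < b := by
    rcases hm.2.eq_or_lt with h | h
    · rw [h] at hmP; linarith
    · exact h
  have hmP' : P ≤ H1 m := by
    have : Tendsto H1 (nhdsWithin m (Ioi m)) (nhds (H1 m)) :=
      (S.dH1 m hm.1).continuousAt.continuousWithinAt
    refine ge_of_tendsto this ?_
    filter_upwards [Ioo_mem_nhdsGT hmb] with s hs
    exact (hgt s hs.1 hs.2.le).le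
  have hge : ∀ s, m ≤ s → s ≤ b → 0 ≤ H1 s := by
    intro s hs hsb
    rcases hs.eq_or_lt with h | h
    · rw [← h]; linarith
    · linarith [hgt s h hsb]
  have hHmono : ∀ s t, m ≤ s → s ≤ t → t ≤ b → H s ≤ H t := by
    intro s t hs hst ht
    exact mono_aux hst (fun r hr => S.dH r (hm.1.trans (hs.trans hr.1)))
      (fun r hr => hge r (hs.trans hr.1.le) (hr.2.le.trans ht))
  have hHm : H m ≤ q m := by
    by_contra hcc
    push Not at hcc
    have := anti_aux (f := H1) hmb.le (fun r hr => S.dH1 r (hm.1.trans hr.1))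
      (fun r hr => S.concave_rise (hm.1.trans hr.1.le)
        (lt_of_le_of_lt (S.qanti hm.1 hr.1.le) (hcc.trans_le (hHmono m r le_rfl hr.1.le hr.2.le)))
        (hge r hr.1.le hr.2.le))
    linarith
  have hcomp3 : IsCompact {s | s ∈ Icc m b ∧ H s - 2 * q s ≤ 0} := by
    apply isCompact_Icc.of_isClosed_subset _ (fun s hs => hs.1)
    have hc : ContinuousOn (fun s => H s - 2 * q s) (Icc m b) := fun s hs =>
      ((S.dH s (hm.1.trans hs.1)).continuousAt.sub
        ((S.qd s (hm.1.trans hs.1)).continuousAt.const_mul 2)).continuousWithinAt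
    exact hc.preimage_isClosed_of_isClosed isClosed_Icc isClosed_Iic
  have hqm := S.qpos m hm.1
  obtain ⟨z, ⟨hz, hzq⟩, hzmax⟩ := hcomp3.exists_isGreatest ⟨m, ⟨le_rfl, hmb.le⟩, by linarith⟩
  have hz0 : x0 ≤ z := hm.1.trans hz.1
  have hz1 : 1 ≤ z := hx0.trans hz0
  have hzgt : ∀ s, z < s → s ≤ b → 2 * q s < H s := by
    intro s hs hsb
    by_contra hcc
    push Not at hcc
    have := hzmax ⟨⟨hz.1.trans hs.le, hsb⟩, by linarith⟩
    linarith
  have hqz := S.qle z hz0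
  have hzb : z < b := by
    rcases hz.2.eq_or_lt with h | h
    · rw [h] at hzq hqz
      nlinarith
    · exact h
  have hconc : ∀ s, z < s → s ≤ b → H2 s ≤ 0 := by
    intro s hs hsb
    have hs0 := hz0.trans hs.le
    exact S.concave_rise hs0 (by linarith [hzgt s hs hsb, S.qpos s hs0])
      (hge s (hz.1.trans hs.le) hsb)
  set v := H1 z with hv
  have hv0 : 0 ≤ v := hge z hz.1 hz.2
  -- upper bound for v
  have hvle : v ^ 2 ≤ C' * z ^ 4 := by
    have := anti_aux (f := fun s => H1 s ^ 2 - 2 * C * z ^ 3 * H s)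
      (f' := fun s => 2 * H1 s * H2 s - 2 * C * z ^ 3 * H1 s) hz.1
      (fun s hs => by
        have h0 := hm.1.trans hs.1
        have := ((S.dH1 s h0).pow 2).sub ((S.dH s h0).const_mul (2 * C * z ^ 3))
        exact this.congr_deriv (by simp))
      (fun s hs => by
        have h0 := hm.1.trans hs.1.le
        have h1 := hge s hs.1.le (hs.2.le.trans hz.2)
        have h2 := hC2 s h0
        have h3 : s ^ 3 ≤ z ^ 3 := pow_le_pow_left₀ (by linarith) hs.2.le 3
        have h4 : H2 s ≤ C * z ^ 3 := h2.trans (by gcongr)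
        nlinarith)
    have hHm0 := S.Hpos m hm.1
    have e1 : H1 m ^ 2 = P ^ 2 := by rw [le_antisymm hmP hmP']
    have e2 : H z - H m ≤ 2 := by linarith
    have e3 : z ^ 3 ≤ z ^ 4 := pow_le_pow_right₀ hz1 (by norm_num)
    have e4 : 1 ≤ z ^ 4 := one_le_pow₀ hz1
    have e5 : 0 ≤ 2 * C * z ^ 3 := by positivity
    have e6 : 2 * C * z ^ 3 * (H z - H m) ≤ 2 * C * z ^ 3 * 2 := by gcongr
    have e7 : C * z ^ 3 ≤ C * z ^ 4 := by gcongr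
    have e8 : P ^ 2 * 1 ≤ P ^ 2 * z ^ 4 := by gcongr
    have e9 : C' * z ^ 4 = P ^ 2 * z ^ 4 + 4 * (C * z ^ 4) := by rw [hC']; ring
    rw [e9]
    linarith
  -- growth
  set t := b - z with ht
  have ht0 : 0 < t := by linarith
  have hH1le : ∀ s, z ≤ s → s ≤ b → H1 s ≤ v := by
    intro s hs hsb
    exact anti_aux (f := H1) hs (fun r hr => S.dH1 r (hz0.trans hr.1))
      (fun r hr => hconc r hr.1 (hr.2.le.trans hsb))
  have hvt : (K - 2) * z ^ 2 ≤ v * t := by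
    have := mono_aux (f := fun s => v * s - H s) (f' := fun s => v - H1 s) hzb.le
      (fun s hs => by
        have := ((hasDerivAt_id s).const_mul v).sub (S.dH s (hz0.trans hs.1))
        exact this.congr_deriv (by simp))
      (fun s hs => by linarith [hH1le s hs.1.le hs.2.le])
    have h2 : z ^ 2 ≤ b ^ 2 := pow_le_pow_left₀ (by linarith) hz.2 2
    have h3 : 1 ≤ z ^ 2 := one_le_pow₀ hz1
    have h4 : K * z ^ 2 ≤ K * b ^ 2 := by gcongr
    nlinarith
  have hH2b : H2 b ≤ 0 := hconc b hzb le_rfl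
  have hH2s : ∀ s, z ≤ s → s ≤ b → H2 s ≤ - (z ^ 2 / 4) * (b - s) := by
    intro s hs hsb
    have := mono_aux (f := fun r => H2 r - z ^ 2 / 4 * r)
      (f' := fun r => (r ^ 2 + a - 1 / H r ^ 3) - z ^ 2 / 4) hsb
      (fun r hr => by
        have := (S.dH2 r (hz0.trans (hs.trans hr.1))).sub ((hasDerivAt_id r).const_mul (z ^ 2 / 4))
        exact this.congr_deriv (by simp))
      (fun r hr => by
        have h1 := S.third_big (hz0.trans (hs.trans hr.1.le)) (hzgt r (hs.trans_lt hr.1) hr.2.le).le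
        have h2 : z ^ 2 ≤ r ^ 2 := pow_le_pow_left₀ (by linarith) (hs.trans hr.1.le) 2
        linarith)
    linarith
  have hvge : z ^ 2 * t ^ 2 / 8 ≤ v := by
    have := anti_aux (f := fun s => H1 s - z ^ 2 / 8 * (b - s) ^ 2)
      (f' := fun s => H2 s + z ^ 2 / 4 * (b - s)) hzb.le
      (fun s hs => by
        have := (S.dH1 s (hz0.trans hs.1)).sub
          ((((hasDerivAt_id s).const_sub b).pow 2).const_mul (z ^ 2 / 8))
        exact this.congr_deriv (by simp; ring))
      (fun s hs => by linarith [hH2s s hs.1.le hs.2.le])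
    have h0 := hge b hmb.le le_rfl
    rw [sub_self] at this
    rw [ht]
    linarith
  -- contradiction
  clear hcomp hcomp2 hcomp3 hmin hmax hzmax hlt hgt hge hHmono hzgt hconc hH1le hH2s
  clear_value K C' t v P
  have c1 : (K - 2) ^ 2 * z ^ 4 ≤ v ^ 2 * t ^ 2 := by
    have := pow_le_pow_left₀ (by have : 0 ≤ K - 2 := by linarith
                                 positivity) hvt 2
    calc (K - 2) ^ 2 * z ^ 4 = ((K - 2) * z ^ 2) ^ 2 := by ring
      _ ≤ _ := this
      _ = _ := by ring
  have c2 : (K - 2) ^ 2 * z ^ 6 ≤ 8 * v ^ 3 := by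
    have e : v ^ 2 * (z ^ 2 * t ^ 2 / 8) ≤ v ^ 2 * v := by gcongr
    have e2 : (K - 2) ^ 2 * z ^ 4 * z ^ 2 ≤ v ^ 2 * t ^ 2 * z ^ 2 := by gcongr
    linarith
  have c3 : ((K - 2) ^ 2 * z ^ 6) ^ 2 ≤ (8 * v ^ 3) ^ 2 := by
    apply pow_le_pow_left₀ (by positivity) c2
  have c4 : (v ^ 2) ^ 3 ≤ (C' * z ^ 4) ^ 3 := pow_le_pow_left₀ (by positivity) hvle 3
  have c5 : (K - 2) ^ 4 * z ^ 12 ≤ 64 * C' ^ 3 * z ^ 12 := by linarith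
  have c6 : (K - 2) ^ 4 ≤ 64 * C' ^ 3 := le_of_mul_le_mul_right c5 (by positivity)
  have c7 : (64 * (C' + 1)) ^ 4 ≤ (K - 2) ^ 4 :=
    pow_le_pow_left₀ (by positivity) (by linarith) 4
  have c8 : 64 * C' ^ 3 < (64 * (C' + 1)) ^ 4 := by
    have : 0 ≤ C' ^ 3 := by positivity
    have : 0 ≤ C' ^ 4 := by positivity
    nlinarith
  linarith

end EtaSys

namespace EtaSys
variable {a x0 M0 : ℝ} {q H H1 H2 : ℝ → ℝ}

lemma energy (S : EtaSys a x0 M0 q H H1 H2) : ∃ e : ℝ → ℝ, (∃ E : ℝ, ∀ x ≥ x0, e x ≤ E) ∧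
    ∀ x ≥ x0, H1 x = -(2 / 3) * x * q x ^ 3 * H x →
      H x / q x + q x ^ 2 / (2 * H x ^ 2) - 7 * x ^ 3 * q x ^ 11 * H x ^ 2 ≤ e x := by
  obtain ⟨K, hK, hKle⟩ := S.H_le
  have hx0 := S.hx0
  refine ⟨fun x => q x ^ 2 * (- H1 x * H2 x + (x ^ 2 + a) * H x + 1 / (2 * H x ^ 2))
    + (-(2 / 3) * x * q x ^ 5) * (H x * H2 x) + (-(1 / 3) * x * q x ^ 5) * H1 x ^ 2
    - (-(2 / 3) * q x ^ 5 + (20 / 9) * x ^ 2 * q x ^ 8) * (H x * H1 x)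
    + ((10 / 3) * x * q x ^ 8 - (160 / 27) * x ^ 3 * q x ^ 11) * H x ^ 2, ?_, ?_⟩
  · set e : ℝ → ℝ := fun x => q x ^ 2 * (- H1 x * H2 x + (x ^ 2 + a) * H x + 1 / (2 * H x ^ 2))
      + (-(2 / 3) * x * q x ^ 5) * (H x * H2 x) + (-(1 / 3) * x * q x ^ 5) * H1 x ^ 2
      - (-(2 / 3) * q x ^ 5 + (20 / 9) * x ^ 2 * q x ^ 8) * (H x * H1 x)
      + ((10 / 3) * x * q x ^ 8 - (160 / 27) * x ^ 3 * q x ^ 11) * H x ^ 2 with he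
    have hde : ∀ x ≥ x0, HasDerivAt e (- q x ^ 2 * H2 x ^ 2
        - (-(1 / 3) * q x ^ 5 + (10 / 9) * x ^ 2 * q x ^ 8) * H1 x ^ 2
        + ((10 / 3) * q x ^ 8 - (320 / 9) * x ^ 2 * q x ^ 11 + (3520 / 81) * x ^ 4 * q x ^ 14)
          * H x ^ 2) x := by
      intro x hx
      have hq := S.qd x hx
      have h0 := S.dH x hx
      have h1 := S.dH1 x hx
      have h2 := S.dH2 x hx
      have hx' := hasDerivAt_id x
      have hHp := S.Hpos x hx
      have hne : 2 * H x ^ 2 ≠ 0 := by positivity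
      have hinv : HasDerivAt (fun x => 1 / (2 * H x ^ 2)) (- H1 x / H x ^ 3) x := by
        have := ((h0.pow 2).const_mul 2).inv (by positivity)
        simp only [one_div]
        refine this.congr_deriv ?_
        simp only [Nat.cast_ofNat, Pi.pow_apply]
        field_simp
        ring
      have D := (((((hq.pow 2).mul (((h1.neg.mul h2).add
        (((hx'.pow 2).add_const a).mul h0)).add hinv)).add
        (((hx'.const_mul (-(2 / 3))).mul (hq.pow 5)).mul (h0.mul h2))).add
        (((hx'.const_mul (-(1 / 3))).mul (hq.pow 5)).mul (h1.pow 2))).sub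
        ((((hq.pow 5).const_mul (-(2 / 3))).add
          (((hx'.pow 2).const_mul (20 / 9)).mul (hq.pow 8))).mul (h0.mul h1))).add
        ((((hx'.const_mul (10 / 3)).mul (hq.pow 8)).sub
          (((hx'.pow 3).const_mul (160 / 27)).mul (hq.pow 11))).mul (h0.pow 2))
      refine HasDerivAt.congr_deriv (f := e) D ?_
      have hqg := S.qg x hx
      simp only [Nat.cast_ofNat, Pi.pow_apply, Pi.mul_apply, Pi.add_apply, Pi.neg_apply,
        Pi.sub_apply, id]
      have hHi : H x * (1 / H x) = 1 := by field_simp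
      have e1 : 1 / (2 * H x ^ 2) = (1 / 2) * (1 / H x) ^ 2 := by field_simp
      have e2 : -H1 x / H x ^ 3 = - H1 x * (1 / H x) ^ 3 := by field_simp
      have e3 : 1 / H x ^ 3 = (1 / H x) ^ 3 := by field_simp
      rw [e1, e2, e3]
      generalize 1 / H x = k at *
      have hk : H x * k ^ 3 = k ^ 2 := by linear_combination k ^ 2 * hHi
      norm_num
      linear_combination (-2 * x * q x ^ 2 * H x) * hqg + (2 / 3) * x * q x ^ 5 * hk
    have hdle : ∀ x ≥ x0, HasDerivAt (fun x => x * q x ^ 2)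
        (q x ^ 2 * (1 - (4 / 3) * (x ^ 2 * q x ^ 3))) x := by
      intro x hx
      have := (hasDerivAt_id x).mul ((S.qd x hx).pow 2)
      refine this.congr_deriv ?_
      simp
      ring
    refine ⟨e x0 + 1000 * K ^ 2 * (x0 * q x0 ^ 2), fun x hx => ?_⟩
    have := anti_aux (f := fun x => e x + 1000 * K ^ 2 * (x * q x ^ 2)) hx
      (fun t ht => (hde t ht.1).add ((hdle t ht.1).const_mul (1000 * K ^ 2)))
      (fun t ht => by
        have ht0 := ht.1.le
        obtain ⟨hr1, hr2⟩ := S.xq ht0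
        have hq := S.qpos t ht0
        have hH := S.Hpos t ht0
        have hHK := hKle t ht0
        set r := t ^ 2 * q t ^ 3 with hr
        have f1 : (-(1 / 3) * q t ^ 5 + (10 / 9) * t ^ 2 * q t ^ 8) =
          q t ^ 5 * (-(1 / 3) + (10 / 9) * r) := by rw [hr]; ring
        have f2 : ((10 / 3) * q t ^ 8 - (320 / 9) * t ^ 2 * q t ^ 11 +
          (3520 / 81) * t ^ 4 * q t ^ 14) =
          q t ^ 8 * (10 / 3 - (320 / 9) * r + (3520 / 81) * r ^ 2) := by rw [hr]; ring
        rw [f1, f2]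
        have g1 : 0 ≤ q t ^ 5 * (-(1 / 3) + (10 / 9) * r) * H1 t ^ 2 := by
          have : 0 ≤ -(1 / 3) + (10 / 9) * r := by linarith
          positivity
        have g2 : 0 ≤ q t ^ 2 * H2 t ^ 2 := by positivity
        have g3 : H t ^ 2 ≤ (K * t ^ 2) ^ 2 := pow_le_pow_left₀ hH.le hHK 2
        have g4 : 10 / 3 - (320 / 9) * r + (3520 / 81) * r ^ 2 ≤ 60 := by nlinarith
        have g5 : q t ^ 8 * (10 / 3 - (320 / 9) * r + (3520 / 81) * r ^ 2) * H t ^ 2 ≤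
            q t ^ 8 * 60 * (K * t ^ 2) ^ 2 := by
          gcongr
        have g6 : q t ^ 8 * 60 * (K * t ^ 2) ^ 2 = 60 * (K ^ 2 * q t ^ 2) * r ^ 2 := by
          rw [hr]; ring
        have g7 : 0 ≤ K ^ 2 * q t ^ 2 := by positivity
        have g8 : r ^ 2 ≤ 2 := by nlinarith
        nlinarith)
    have hq := S.qpos x hx
    have : 0 ≤ 1000 * K ^ 2 * (x * q x ^ 2) := by
      have : 0 ≤ x := by linarith
      positivity
    linarith
  · intro x hx hcrit
    have hq := S.qpos x hx
    have hH := S.Hpos x hx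
    obtain ⟨hr1, hr2⟩ := S.xq hx
    have hqg := S.qg x hx
    have hX : H x / q x = q x ^ 2 * (x ^ 2 + a) * H x := by
      rw [div_eq_iff hq.ne']; linear_combination (-H x) * hqg
    have hp : 0 < x := by linarith
    simp only
    rw [hX, hcrit]
    have f0 : q x ^ 2 / (2 * H x ^ 2) = q x ^ 2 * (1 / (2 * H x ^ 2)) := by ring
    rw [f0]
    have f1 : 0 ≤ x * q x ^ 8 * H x ^ 2 * (10 / 3 - 4 / 9 + (-(4 / 27) + 40 / 27 - 160/27 + 7) * (x ^ 2 * q x ^ 3)) := by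
      have : 0 ≤ (10 / 3 - 4 / 9 + (-(4 / 27) + 40 / 27 - 160/27 + 7) * (x ^ 2 * q x ^ 3)) := by
        linarith
      positivity
    linarith
end EtaSys

namespace EtaSys
variable {a x0 M0 : ℝ} {q H H1 H2 : ℝ → ℝ}

lemma crit (S : EtaSys a x0 M0 q H H1 H2) : ∃ E > 0, ∃ x2 ≥ x0, ∀ x ≥ x2,
    H1 x = -(2 / 3) * x * q x ^ 3 * H x →
      H x / q x ≤ 2 * E ∧ 1 / (1 + 2 * E) ≤ H x / q x := by
  obtain ⟨e, ⟨E, hE⟩, he⟩ := S.energy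
  obtain ⟨K, hK, hKle⟩ := S.H_le
  obtain ⟨N, hN⟩ := eventually_atTop.1 (S.q0.eventually (gt_mem_nhds
    (show (0:ℝ) < 1 / (1000 * K) by positivity)))
  refine ⟨|E| + 1, by positivity, max x0 N, le_max_left _ _, fun x hx hcr => ?_⟩
  have hx0 : x0 ≤ x := (le_max_left _ _).trans hx
  have hqN := hN x ((le_max_right _ _).trans hx)
  have h := (he x hx0 hcr).trans (hE x hx0)
  have hq := S.qpos x hx0
  have hq1 := S.qle x hx0
  have hH := S.Hpos x hx0
  have hHK := hKle x hx0
  have hx1 : 1 ≤ x := S.hx0.trans hx0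
  obtain ⟨hr1, hr2⟩ := S.xq hx0
  set X := H x / q x with hX
  have hXpos : 0 < X := by positivity
  have hHX : H x = X * q x := by rw [hX]; field_simp
  have f1 : q x ^ 2 / (2 * H x ^ 2) = 1 / (2 * X ^ 2) := by
    rw [hHX]; field_simp
  rw [f1] at h
  have f2 : 7 * x ^ 3 * q x ^ 11 * H x ^ 2 ≤ X / 2 := by
    have g1 : 7 * x ^ 3 * q x ^ 11 * H x ^ 2 = 7 * x ^ 3 * q x ^ 12 * H x * X := by
      rw [sq]; nth_rewrite 2 [hHX]; ring
    have g2 : 7 * x ^ 3 * q x ^ 12 * H x * X ≤ 7 * x ^ 3 * q x ^ 12 * (K * x ^ 2) * X := by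
      gcongr
    have g3 : x ≤ x ^ 2 := by nlinarith
    have g4 : 7 * x ^ 3 * q x ^ 12 * (K * x ^ 2) * X ≤ 7 * (x ^ 2 * x ^ 2) * q x ^ 12 * (K * x ^ 2) * X := by
      have : x ^ 3 ≤ x ^ 2 * x ^ 2 := by nlinarith [sq_nonneg x]
      gcongr
    have g5 : 7 * (x ^ 2 * x ^ 2) * q x ^ 12 * (K * x ^ 2) * X =
        7 * K * X * (x ^ 2 * q x ^ 3) ^ 3 * q x ^ 3 := by ring
    have g6 : (x ^ 2 * q x ^ 3) ^ 3 ≤ 2 := by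
      calc (x ^ 2 * q x ^ 3) ^ 3 ≤ (101 / 100) ^ 3 := pow_le_pow_left₀ (by positivity) hr1 3
        _ ≤ 2 := by norm_num
    have g7 : q x ^ 3 ≤ 1 / (1000 * K) := by
      have : q x ^ 3 ≤ q x := by nlinarith [sq_nonneg (q x)]
      linarith
    have g8 : 7 * K * X * (x ^ 2 * q x ^ 3) ^ 3 * q x ^ 3 ≤ 7 * K * X * 2 * (1 / (1000 * K)) := by
      gcongr
    have g9 : 7 * K * X * 2 * (1 / (1000 * K)) = X * (14 / 1000) := by field_simp; norm_num
    nlinarith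
  have hE' : E ≤ |E| := le_abs_self E
  have hE0 : 0 ≤ |E| := abs_nonneg E
  have hY : 0 < 1 / (2 * X ^ 2) := by positivity
  refine ⟨by linarith, ?_⟩
  have h3 : 1 / (2 * X ^ 2) ≤ |E| + 1 := by linarith
  rw [div_le_iff₀ (by positivity)] at h3
  rw [div_le_iff₀ (by positivity)]
  by_contra hc
  push Not at hc
  have : X < 1 := by nlinarith
  nlinarith

lemma dX (S : EtaSys a x0 M0 q H H1 H2) {x : ℝ} (hx : x0 ≤ x) :
    HasDerivAt (fun x => H x / q x) ((H1 x + (2 / 3) * x * q x ^ 3 * H x) / q x) x := by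
  have hq := S.qpos x hx
  have := (S.dH x hx).div (S.qd x hx) hq.ne'
  refine this.congr_deriv ?_
  field_simp
  ring

lemma crit_of (S : EtaSys a x0 M0 q H H1 H2) {x : ℝ} (hx : x0 ≤ x)
    (h : IsLocalExtr (fun x => H x / q x) x) : H1 x = -(2 / 3) * x * q x ^ 3 * H x := by
  have := h.hasDerivAt_eq_zero (S.dX hx)
  rw [div_eq_zero_iff] at this
  rcases this with h | h
  · linarith
  · exact absurd h (S.qpos x hx).ne'

lemma crash (S : EtaSys a x0 M0 q H H1 H2) {y : ℝ} (hy : x0 ≤ y)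
    (h : ∀ z ≥ y, H z ≤ q z / 2) : False := by
  have i2 : ∀ z ≥ y, H2 z ≤ H2 y - (z - y) := by
    intro z hz
    have := anti_aux (f := fun x => H2 x + x) (f' := fun x => (x ^ 2 + a - 1 / H x ^ 3) + 1) hz
      (fun s hs => (S.dH2 s (hy.trans hs.1)).add (hasDerivAt_id s))
      (fun s hs => by linarith [S.third_neg (hy.trans hs.1.le) (h s hs.1.le)])
    linarith
  have i1 : ∀ z ≥ y, H1 z ≤ H1 y + H2 y * (z - y) - (z - y) ^ 2 / 2 := by
    intro z hz
    have := anti_aux (f := fun x => H1 x - (H2 y * (x - y) - (x - y) ^ 2 / 2))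
      (f' := fun x => H2 x - (H2 y - (x - y))) hz
      (fun s hs => by
        have hs' := (hasDerivAt_id s).sub_const y
        have := (S.dH1 s (hy.trans hs.1)).sub ((hs'.const_mul (H2 y)).sub ((hs'.pow 2).div_const 2))
        exact this.congr_deriv (by simp))
      (fun s hs => by linarith [i2 s hs.1.le])
    simp only [sub_self] at this
    linarith
  have i0 : ∀ z ≥ y, H z ≤ H y + H1 y * (z - y) + H2 y * (z - y) ^ 2 / 2 - (z - y) ^ 3 / 6 := by
    intro z hz
    have := anti_aux (f := fun x => H x - (H1 y * (x - y) + H2 y * ((x - y) ^ 2 / 2) - (x - y) ^ 3 / 6))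
      (f' := fun x => H1 x - (H1 y + H2 y * (x - y) - (x - y) ^ 2 / 2)) hz
      (fun s hs => by
        have hs' := (hasDerivAt_id s).sub_const y
        have := (S.dH s (hy.trans hs.1)).sub (((hs'.const_mul (H1 y)).add
          (((hs'.pow 2).div_const 2).const_mul (H2 y))).sub ((hs'.pow 3).div_const 6))
        exact this.congr_deriv (by simp; ring))
      (fun s hs => by linarith [i1 s hs.1.le])
    simp only [sub_self] at this
    linarith
  set A := H y
  set B := |H1 y| with hB
  set D := |H2 y| with hD
  have hA : 0 < A := S.Hpos y hy
  have hB0 : 0 ≤ B := abs_nonneg _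
  have hD0 : 0 ≤ D := abs_nonneg _
  set s := 1 + 6 * (A + B + D) with hs
  have hs1 : 1 ≤ s := by linarith
  have h0 := i0 (y + s) (by linarith)
  have hp := S.Hpos (y + s) (by linarith)
  rw [add_sub_cancel_left] at h0
  have j1 : H1 y * s ≤ B * s ^ 2 := by
    have : H1 y * s ≤ B * s := by have := le_abs_self (H1 y); gcongr
    have h2 : s ≤ s ^ 2 := by nlinarith
    have : B * s ≤ B * s ^ 2 := by gcongr
    linarith
  have j2 : H2 y * s ^ 2 ≤ D * s ^ 2 := by have := le_abs_self (H2 y); gcongr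
  have j3 : A ≤ A * s ^ 2 := by nlinarith
  have j4 : s ^ 3 = s ^ 2 + 6 * (A + B + D) * s ^ 2 := by rw [pow_succ]; nth_rewrite 2 [hs]; ring
  have j5 : 0 ≤ D * s ^ 2 := by positivity
  have j6 : 0 < s ^ 2 := by positivity
  nlinarith

lemma bounded (S : EtaSys a x0 M0 q H H1 H2) : ∃ m > 0, ∃ M, ∃ x2 ≥ x0, ∀ x ≥ x2,
    m ≤ H x / q x ∧ H x / q x ≤ M := by
  obtain ⟨E, hE, x2, hx2, hcr⟩ := S.crit
  have hcont : ∀ z, ContinuousOn (fun x => H x / q x) (Icc x2 z) := fun z x hx =>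
    (S.dX (hx2.trans hx.1)).continuousAt.continuousWithinAt
  have hX2 : 0 < H x2 / q x2 := div_pos (S.Hpos x2 hx2) (S.qpos x2 hx2)
  set m := min (H x2 / q x2) (min (1 / (1 + 2 * E)) (1 / 2)) with hm
  have hmp : 0 < m := lt_min hX2 (lt_min (by positivity) (by norm_num))
  have hm1 : m ≤ H x2 / q x2 := min_le_left _ _
  have hm2 : m ≤ 1 / (1 + 2 * E) := (min_le_right _ _).trans (min_le_left _ _)
  have hm3 : m ≤ 1 / 2 := (min_le_right _ _).trans (min_le_right _ _)
  refine ⟨m, hmp, max (H x2 / q x2) (max (2 * E) M0), x2, hx2, fun y hy => ⟨?_, ?_⟩⟩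
  · by_contra hc
    push Not at hc
    by_cases hz : ∃ z ≥ y, m ≤ H z / q z
    · obtain ⟨z, hz, hmz⟩ := hz
      obtain ⟨t, ht, htmin⟩ := isCompact_Icc.exists_isMinOn ⟨y, ⟨hy, hz⟩⟩ (hcont z)
      have hty : H t / q t < m := (htmin ⟨hy, hz⟩ : H t / q t ≤ H y / q y).trans_lt hc
      have ht1 : x2 < t := lt_of_le_of_ne ht.1 (fun h => by rw [← h] at hty; linarith)
      have ht2 : t < z := lt_of_le_of_ne ht.2 (fun h => by rw [h] at hty; linarith)
      have hl := htmin.isLocalMin (Icc_mem_nhds ht1 ht2)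
      have := (hcr t ht1.le (S.crit_of (hx2.trans ht1.le) (Or.inl hl))).2
      linarith
    · push Not at hz
      refine S.crash (hx2.trans hy) (fun z hzy => ?_)
      have h1 := hz z hzy
      have h2 := S.qpos z (hx2.trans (hy.trans hzy))
      rw [div_lt_iff₀ h2] at h1
      nlinarith
  · obtain ⟨z, hz, hzM⟩ := S.fr y
    have hqz := S.qpos z (hx2.trans (hy.trans hz))
    obtain ⟨t, ht, htmax⟩ := isCompact_Icc.exists_isMaxOn ⟨y, ⟨hy, hz⟩⟩ (hcont z)
    have hty : H y / q y ≤ H t / q t := htmax ⟨hy, hz⟩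
    refine hty.trans ?_
    rcases ht.1.eq_or_lt with h | h
    · rw [← h]; exact le_max_left _ _
    rcases ht.2.eq_or_lt with h' | h'
    · rw [h']
      refine le_trans ?_ ((le_max_right _ _).trans (le_max_right _ _))
      rw [div_le_iff₀ hqz]; exact hzM
    · have hl := htmax.isLocalMax (Icc_mem_nhds h h')
      have := (hcr t h.le (S.crit_of (hx2.trans h.le) (Or.inr hl))).1
      exact this.trans ((le_max_left _ _).trans (le_max_right _ _))
end EtaSys

lemma lip_aux {f f' : ℝ → ℝ} {a b B : ℝ}
    (hd : ∀ x ∈ Icc a b, HasDerivAt f (f' x) x) (h : ∀ x ∈ Icc a b, |f' x| ≤ B)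
    {x y : ℝ} (hx : x ∈ Icc a b) (hy : y ∈ Icc a b) : |f y - f x| ≤ B * |y - x| :=
  (convex_Icc a b).norm_image_sub_le_of_norm_hasDerivWithin_le
    (fun x hx => (hd x hx).hasDerivWithinAt) h hx hy

structure TauSys (m M C N0 : ℝ) (Φ W Ψ u du k0 k1 k2 k3 : ℝ → ℝ) : Prop where
  hm : 0 < m
  hC : 0 < C
  lo : ∀ t ≤ N0, m ≤ Φ t
  hi : ∀ t ≤ N0, Φ t ≤ M
  dΦ : ∀ t ≤ N0, HasDerivAt Φ (W t) t
  dW : ∀ t ≤ N0, HasDerivAt W (Ψ t) t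
  dΨ : ∀ t ≤ N0, HasDerivAt Ψ (1 / Φ t ^ 3 - 1 - (k0 t + k1 t * Φ t + k2 t * W t + k3 t * Ψ t)) t
  hdu : ∀ t ≤ N0, HasDerivAt u (du t) t
  upos : ∀ t ≤ N0, 0 < u t
  ule : ∀ t ≤ N0, u t ≤ 1
  dule : ∀ t ≤ N0, u t ^ 18 / 18 ≤ du t
  u0 : Tendsto u atBot (nhds 0)
  b0 : ∀ t ≤ N0, |k0 t| ≤ C * u t ^ 18
  b1 : ∀ t ≤ N0, |k1 t| ≤ C * u t ^ 18
  b2 : ∀ t ≤ N0, |k2 t| ≤ C * u t ^ 18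
  b3 : ∀ t ≤ N0, |k3 t| ≤ u t ^ 9

namespace TauSys
variable {m M C N0 : ℝ} {Φ W Ψ u du k0 k1 k2 k3 : ℝ → ℝ}

lemma small (S : TauSys m M C N0 Φ W Ψ u du k0 k1 k2 k3) {ε : ℝ} (hε : 0 < ε) :
    ∃ N ≤ N0, ∀ t ≤ N, |k0 t| ≤ ε ∧ |k1 t| ≤ ε ∧ |k2 t| ≤ ε ∧ |k3 t| ≤ ε := by
  have t1 : Tendsto (fun t => C * u t ^ 18) atBot (nhds 0) := by
    simpa using (S.u0.pow 18).const_mul C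
  have t2 : Tendsto (fun t => u t ^ 9) atBot (nhds 0) := by
    simpa using (S.u0.pow 9)
  obtain ⟨N, hN⟩ := eventually_atBot.1 ((t1.eventually (gt_mem_nhds hε)).and
    (t2.eventually (gt_mem_nhds hε)))
  refine ⟨min N N0, min_le_right _ _, fun t ht => ?_⟩
  have h1 := hN t (ht.trans (min_le_left _ _))
  have h2 := ht.trans (min_le_right _ _)
  exact ⟨(S.b0 t h2).trans h1.1.le, (S.b1 t h2).trans h1.1.le, (S.b2 t h2).trans h1.1.le,
    (S.b3 t h2).trans h1.2.le⟩

lemma pert (S : TauSys m M C N0 Φ W Ψ u du k0 k1 k2 k3) {ε t : ℝ} (hε : 0 ≤ ε) (ht : t ≤ N0)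
    (h : |k0 t| ≤ ε ∧ |k1 t| ≤ ε ∧ |k2 t| ≤ ε ∧ |k3 t| ≤ ε) :
    |k0 t + k1 t * Φ t + k2 t * W t + k3 t * Ψ t| ≤ ε * (1 + M + |W t| + |Ψ t|) := by
  have hΦ : 0 < Φ t := S.hm.trans_le (S.lo t ht)
  have h1 : |k1 t * Φ t| ≤ ε * M := by
    rw [abs_mul, abs_of_pos hΦ]
    exact mul_le_mul h.2.1 (S.hi t ht) hΦ.le hε
  have h2 : |k2 t * W t| ≤ ε * |W t| := by
    rw [abs_mul]; exact mul_le_mul_of_nonneg_right h.2.2.1 (abs_nonneg _)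
  have h3 : |k3 t * Ψ t| ≤ ε * |Ψ t| := by
    rw [abs_mul]; exact mul_le_mul_of_nonneg_right h.2.2.2 (abs_nonneg _)
  have := abs_add_le (k0 t + k1 t * Φ t + k2 t * W t) (k3 t * Ψ t)
  have := abs_add_le (k0 t + k1 t * Φ t) (k2 t * W t)
  have := abs_add_le (k0 t) (k1 t * Φ t)
  nlinarith [h.1]

lemma invb (S : TauSys m M C N0 Φ W Ψ u du k0 k1 k2 k3) {t : ℝ} (ht : t ≤ N0) :
    |1 / Φ t ^ 3 - 1| ≤ 1 / m ^ 3 + 1 := by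
  have hm := S.hm
  have hΦ : 0 < Φ t := S.hm.trans_le (S.lo t ht)
  have : 1 / Φ t ^ 3 ≤ 1 / m ^ 3 :=
    one_div_le_one_div_of_le (by positivity) (pow_le_pow_left₀ hm.le (S.lo t ht) 3)
  have h2 : 0 < 1 / Φ t ^ 3 := by positivity
  have h3 : 0 < 1 / m ^ 3 := by positivity
  rw [abs_le]; constructor <;> linarith

lemma slope (S : TauSys m M C N0 Φ W Ψ u du k0 k1 k2 k3) {t R : ℝ} (hR : 0 < R) (ht : t + R ≤ N0) :
    ∃ s ∈ Ioo t (t + R), |W s| ≤ M / R := by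
  obtain ⟨s, hs, h⟩ := exists_hasDerivAt_eq_slope Φ W (show t < t + R by linarith)
    (fun x hx => (S.dΦ x (hx.2.trans ht)).continuousAt.continuousWithinAt)
    (fun x hx => S.dΦ x (hx.2.le.trans ht))
  refine ⟨s, hs, ?_⟩
  have a1 := S.lo t (by linarith)
  have a2 := S.hi t (by linarith)
  have a3 := S.lo (t + R) ht
  have a4 := S.hi (t + R) ht
  have hm := S.hm
  rw [h, add_sub_cancel_left, abs_div, abs_of_pos hR]
  gcongr
  rw [abs_le]; constructor <;> linarith

lemma bdd (S : TauSys m M C N0 Φ W Ψ u du k0 k1 k2 k3) :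
    ∃ B > 0, ∃ N ≤ N0, ∀ t ≤ N, |W t| ≤ B ∧ |Ψ t| ≤ B := by
  obtain ⟨N, hN, hk⟩ := S.small (ε := 1 / 100) (by norm_num)
  have hm := S.hm
  have hM : 0 < M := hm.trans_le ((S.lo N0 le_rfl).trans (S.hi N0 le_rfl))
  have hm3 : 0 < 1 / m ^ 3 := by positivity
  set B := 2 * (3 * M + 3 * (1 / m ^ 3) + 4) with hB
  refine ⟨M + 3 * B, by positivity, N - 3, by linarith, fun t ht => ?_⟩
  have htN : ∀ x ∈ Icc t (t + 3), x ≤ N := fun x hx => by linarith [hx.2]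
  have htN0 : ∀ x ∈ Icc t (t + 3), x ≤ N0 := fun x hx => (htN x hx).trans hN
  obtain ⟨s1, hs1, hW1⟩ := S.slope (t := t) (R := 1) (by norm_num) (by linarith)
  obtain ⟨s2, hs2, hW2⟩ := S.slope (t := t + 2) (R := 1) (by norm_num) (by linarith)
  rw [div_one] at hW1 hW2
  have hs1' : s1 ∈ Icc t (t + 3) := ⟨hs1.1.le, by linarith [hs1.2]⟩
  obtain ⟨s3, hs3, h3⟩ := exists_hasDerivAt_eq_slope W Ψ (show s1 < s2 by linarith [hs1.2, hs2.1])
    (fun x hx => (S.dW x (htN0 x ⟨by linarith [hx.1, hs1.1], by linarith [hx.2, hs2.2]⟩)).continuousAt.continuousWithinAt)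
    (fun x hx => S.dW x (htN0 x ⟨by linarith [hx.1, hs1.1], by linarith [hx.2, hs2.2]⟩))
  have hs3' : s3 ∈ Icc t (t + 3) := ⟨by linarith [hs3.1, hs1.1], by linarith [hs3.2, hs2.2]⟩
  have hP3 : |Ψ s3| ≤ 2 * M := by
    rw [h3, abs_div, div_le_iff₀ (abs_pos.2 (by linarith [hs1.2, hs2.1]))]
    have e1 : 1 ≤ |s2 - s1| := (le_abs_self _).trans' (by linarith [hs1.2, hs2.1])
    have e2 := abs_sub (W s2) (W s1)
    nlinarith
  obtain ⟨σ, hσ, hmax⟩ := (isCompact_Icc (a := t) (b := t + 3)).exists_isMaxOn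
    ⟨t, le_rfl, by linarith⟩ (f := fun x => |Ψ x|)
    (fun x hx => (S.dΨ x (htN0 x hx)).continuousAt.abs.continuousWithinAt)
  have hmax' : ∀ x ∈ Icc t (t + 3), |Ψ x| ≤ |Ψ σ| := fun x hx => hmax hx
  set n := |Ψ σ| with hn
  have hn0 : 0 ≤ n := abs_nonneg _
  have hdist : ∀ x ∈ Icc t (t + 3), ∀ y ∈ Icc t (t + 3), |y - x| ≤ 3 := by
    intro x hx y hy
    rw [abs_le]; constructor <;> linarith [hx.1, hx.2, hy.1, hy.2]
  have hW : ∀ x ∈ Icc t (t + 3), |W x| ≤ M + 3 * n := by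
    intro x hx
    have h1 := lip_aux (fun x hx => S.dW x (htN0 x hx)) hmax' hs1' hx
    have h2 := hdist s1 hs1' x hx
    have h3 := abs_sub_abs_le_abs_sub (W x) (W s1)
    nlinarith
  have hP : ∀ x ∈ Icc t (t + 3), |1 / Φ x ^ 3 - 1 - (k0 x + k1 x * Φ x + k2 x * W x + k3 x * Ψ x)|
      ≤ 1 / m ^ 3 + 1 + 1 / 100 * (1 + M + (M + 3 * n) + n) := by
    intro x hx
    have h1 := S.invb (htN0 x hx)
    have h2 := S.pert (by norm_num) (htN0 x hx) (hk x (htN x hx))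
    have h3 := abs_sub (1 / Φ x ^ 3 - 1) (k0 x + k1 x * Φ x + k2 x * W x + k3 x * Ψ x)
    have h4 := hW x hx
    have h5 := hmax' x hx
    linarith
  have hnB : n ≤ B := by
    have h1 := lip_aux (fun x hx => S.dΨ x (htN0 x hx)) hP hs3' hσ
    have h2 := hdist s3 hs3' σ hσ
    have h3 := abs_sub_abs_le_abs_sub (Ψ σ) (Ψ s3)
    have h4 : (1 / m ^ 3 + 1 + 1 / 100 * (1 + M + (M + 3 * n) + n)) * |σ - s3| ≤
      (1 / m ^ 3 + 1 + 1 / 100 * (1 + M + (M + 3 * n) + n)) * 3 := by gcongr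
    rw [← hn] at h3
    linarith
  have htt : t ∈ Icc t (t + 3) := ⟨le_rfl, by linarith⟩
  have := hW t htt
  have := hmax' t htt
  constructor <;> linarith

lemma psi0 (S : TauSys m M C N0 Φ W Ψ u du k0 k1 k2 k3) {ε : ℝ} (hε : 0 < ε) :
    ∃ N ≤ N0, ∀ t ≤ N, |Ψ t| ≤ ε := by
  obtain ⟨B, hB, N1, hN1, hb⟩ := S.bdd
  obtain ⟨N2, hN2, hk⟩ := S.small (ε := 1) (by norm_num)
  have hm := S.hm
  have hC := S.hC
  have hM : 0 < M := hm.trans_le ((S.lo N0 le_rfl).trans (S.hi N0 le_rfl))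
  have hm3 : 0 < 1 / m ^ 3 := by positivity
  set N := min N1 N2 with hN
  have hNN0 : N ≤ N0 := (min_le_left _ _).trans hN1
  have hb' : ∀ t ≤ N, |W t| ≤ B ∧ |Ψ t| ≤ B := fun t ht => hb t (ht.trans (min_le_left _ _))
  set B' := 1 / m ^ 3 + 1 + 1 * (1 + M + B + B) with hB'
  have hB'0 : 0 < B' := by positivity
  have hP : ∀ x ≤ N, |1 / Φ x ^ 3 - 1 - (k0 x + k1 x * Φ x + k2 x * W x + k3 x * Ψ x)| ≤ B' := by
    intro x hx
    have hx0 := hx.trans hNN0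
    have h1 := S.invb hx0
    have h2 := S.pert (by norm_num) hx0 (hk x (hx.trans (min_le_right _ _)))
    have h3 := abs_sub (1 / Φ x ^ 3 - 1) (k0 x + k1 x * Φ x + k2 x * W x + k3 x * Ψ x)
    have h4 := hb' x hx
    linarith
  set K := B * C * (1 + M + B) + B ^ 2 with hK
  have hK0 : 0 < K := by positivity
  set G : ℝ → ℝ := fun t => W t * Ψ t + Φ t + 1 / (2 * Φ t ^ 2) + 18 * K * u t with hG
  have hdG : ∀ t ≤ N, HasDerivAt G (Ψ t ^ 2 - W t * (k0 t + k1 t * Φ t + k2 t * W t + k3 t * Ψ t)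
      + 18 * K * du t) t := by
    intro t ht
    have ht0 := ht.trans hNN0
    have hΦ : 0 < Φ t := S.hm.trans_le (S.lo t ht0)
    have hinv : HasDerivAt (fun x => 1 / (2 * Φ x ^ 2)) (- W t / Φ t ^ 3) t := by
      have h0 : 2 * Φ t ^ 2 ≠ 0 := by positivity
      have := (((S.dΦ t ht0).pow 2).const_mul 2).inv h0
      simp only [one_div]
      refine this.congr_deriv ?_
      simp only [Nat.cast_ofNat, Pi.pow_apply]
      field_simp
      ring
    have D := ((((S.dW t ht0).mul (S.dΨ t ht0)).add (S.dΦ t ht0)).add hinv).add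
      ((S.hdu t ht0).const_mul (18 * K))
    refine HasDerivAt.congr_deriv (f := G) D ?_
    field_simp
    ring
  have hdG2 : ∀ t ≤ N, Ψ t ^ 2 / 2 ≤ Ψ t ^ 2 -
      W t * (k0 t + k1 t * Φ t + k2 t * W t + k3 t * Ψ t) + 18 * K * du t := by
    intro t ht
    have ht0 := ht.trans hNN0
    have hΦ : 0 < Φ t := S.hm.trans_le (S.lo t ht0)
    obtain ⟨hW, hPs⟩ := hb' t ht
    have hu := S.upos t ht0
    have hu1 := S.ule t ht0
    have c0 := S.dule t ht0
    have c1 : |W t * (k0 t + k1 t * Φ t + k2 t * W t)| ≤ B * (C * u t ^ 18 * (1 + M + B)) := by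
      rw [abs_mul]
      apply mul_le_mul hW _ (abs_nonneg _) hB.le
      have h1 : |k1 t * Φ t| ≤ C * u t ^ 18 * M := by
        rw [abs_mul, abs_of_pos hΦ]
        exact mul_le_mul (S.b1 t ht0) (S.hi t ht0) hΦ.le (by positivity)
      have h2 : |k2 t * W t| ≤ C * u t ^ 18 * B := by
        rw [abs_mul]; exact mul_le_mul (S.b2 t ht0) hW (abs_nonneg _) (by positivity)
      have := abs_add_le (k0 t + k1 t * Φ t) (k2 t * W t)
      have := abs_add_le (k0 t) (k1 t * Φ t)
      linarith [S.b0 t ht0]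
    have c2 : (W t * k3 t) ^ 2 ≤ B ^ 2 * u t ^ 18 := by
      have : |W t * k3 t| ≤ B * u t ^ 9 := by
        rw [abs_mul]; exact mul_le_mul hW (S.b3 t ht0) (abs_nonneg _) hB.le
      have h := pow_le_pow_left₀ (abs_nonneg _) this 2
      rw [sq_abs] at h
      calc _ ≤ _ := h
        _ = _ := by ring
    have c3 : K * u t ^ 18 ≤ 18 * K * du t := by nlinarith
    have c4 := (abs_le.1 c1).2
    have c5 := sq_nonneg (Ψ t - W t * k3 t)
    have c6 : 0 ≤ B ^ 2 * u t ^ 18 := by positivity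
    rw [hK] at c3 ⊢
    nlinarith
  have hmono : ∀ s t, s ≤ t → t ≤ N → G s ≤ G t := by
    intro s t hst ht
    exact mono_aux hst (fun x hx => hdG x (hx.2.trans ht)) (fun x hx =>
      le_trans (by positivity) (hdG2 x (hx.2.le.trans ht)))
  have hlow : ∀ t ≤ N, - B ^ 2 ≤ G t := by
    intro t ht
    have ht0 := ht.trans hNN0
    have hΦ : 0 < Φ t := S.hm.trans_le (S.lo t ht0)
    have hu := S.upos t ht0
    obtain ⟨hW, hPs⟩ := hb' t ht
    have h1 : |W t * Ψ t| ≤ B * B := by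
      rw [abs_mul]; exact mul_le_mul hW hPs (abs_nonneg _) hB.le
    have h2 := (abs_le.1 h1).1
    have h3 : 0 < 1 / (2 * Φ t ^ 2) := by positivity
    have h4 : 0 < 18 * K * u t := by positivity
    simp only [hG]
    nlinarith
  -- choose a near-infimum
  have hδ : ∃ d > 0, d = ε / (2 * B') := ⟨_, by positivity, rfl⟩
  obtain ⟨d, hd, hdd⟩ := hδ
  set κ := d * (ε ^ 2 / 8) with hκ
  have hκ0 : 0 < κ := by positivity
  set I := sInf (G '' Iic N) with hI
  have hbdd : BddBelow (G '' Iic N) := ⟨- B ^ 2, by rintro _ ⟨t, ht, rfl⟩; exact hlow t ht⟩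
  obtain ⟨_, ⟨T, hT, rfl⟩, hTI⟩ := exists_lt_of_csInf_lt (s := G '' Iic N) ⟨G N, N, mem_Iic.2 le_rfl, rfl⟩
    (show I < I + κ by linarith)
  have hT : T ≤ N := hT
  refine ⟨T - d, by linarith, fun t ht => ?_⟩
  by_contra hc
  push Not at hc
  have hge : ∀ x ∈ Icc t (t + d), ε / 2 ≤ |Ψ x| := by
    intro x hx
    have hl := lip_aux (a := t) (b := t + d) (fun x hx => S.dΨ x (by linarith [hx.2]))
      (fun x hx => hP x (by linarith [hx.2])) ⟨le_rfl, by linarith⟩ hx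
    have h2 : |x - t| ≤ d := by rw [abs_le]; constructor <;> linarith [hx.1, hx.2]
    have h3 := abs_sub_abs_le_abs_sub (Ψ t) (Ψ x)
    rw [abs_sub_comm] at h3
    have h4 : B' * |x - t| ≤ B' * d := by gcongr
    have h5 : B' * d = ε / 2 := by rw [hdd]; field_simp
    linarith
  have hgrow := mono_aux (f := fun x => G x - ε ^ 2 / 8 * x) (a := t) (b := t + d) (by linarith)
    (fun x hx => (hdG x (by linarith [hx.2])).sub ((hasDerivAt_id x).const_mul (ε ^ 2 / 8)))
    (fun x hx => by
      have h1 := hdG2 x (by linarith [hx.2])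
      have h2 := hge x ⟨hx.1.le, hx.2.le⟩
      have h3 := pow_le_pow_left₀ (by positivity) h2 2
      rw [sq_abs] at h3
      nlinarith)
  have h1 := hmono (t + d) T (by linarith) hT
  have h2 : I ≤ G t := csInf_le hbdd ⟨t, mem_Iic.2 (by linarith), rfl⟩
  rw [hκ] at hTI
  linarith

lemma w0 (S : TauSys m M C N0 Φ W Ψ u du k0 k1 k2 k3) {ε : ℝ} (hε : 0 < ε) :
    ∃ N ≤ N0, ∀ t ≤ N, |W t| ≤ ε := by
  have hM : 0 < M := S.hm.trans_le ((S.lo N0 le_rfl).trans (S.hi N0 le_rfl))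
  obtain ⟨R, hR, hR2⟩ : ∃ R > 0, M / R = ε / 2 := ⟨2 * M / ε, by positivity, by field_simp⟩
  obtain ⟨N, hN, h⟩ := S.psi0 (ε := ε / (2 * R)) (by positivity)
  refine ⟨N - R, by linarith, fun t ht => ?_⟩
  obtain ⟨s, hs, hWs⟩ := S.slope (t := t) hR (by linarith)
  have hl := lip_aux (a := t) (b := t + R) (fun x hx => S.dW x (by linarith [hx.2]))
    (fun x hx => h x (by linarith [hx.2])) ⟨hs.1.le, hs.2.le⟩ ⟨le_rfl, by linarith⟩
  have h2 : |t - s| ≤ R := by rw [abs_le]; constructor <;> linarith [hs.1, hs.2]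
  have h3 := abs_sub_abs_le_abs_sub (W t) (W s)
  have h4 : ε / (2 * R) * |t - s| ≤ ε / (2 * R) * R := by gcongr
  have h5 : ε / (2 * R) * R = ε / 2 := by field_simp
  linarith

lemma final (S : TauSys m M C N0 Φ W Ψ u du k0 k1 k2 k3) :
    ∃ N, ∀ t ≤ N, Φ t + |W t| + |Ψ t| ≤ 3 ∧ 1 / 4 ≤ Φ t := by
  have hM : 0 < M := S.hm.trans_le ((S.lo N0 le_rfl).trans (S.hi N0 le_rfl))
  obtain ⟨N1, hN1, h1⟩ := S.psi0 (ε := 1 / 8) (by norm_num)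
  obtain ⟨N2, hN2, h2⟩ := S.w0 (ε := 1 / 8) (by norm_num)
  obtain ⟨N3, hN3, h3⟩ := S.small (ε := 1 / (8 * (2 + M))) (by positivity)
  refine ⟨min N1 (min N2 N3) - 1, fun t ht => ?_⟩
  have ht1 : ∀ x ≤ t + 1, x ≤ N1 := fun x hx => by linarith [min_le_left N1 (min N2 N3)]
  have ht2 : ∀ x ≤ t + 1, x ≤ N2 := fun x hx => by
    linarith [min_le_right N1 (min N2 N3), min_le_left N2 N3]
  have ht3 : ∀ x ≤ t + 1, x ≤ N3 := fun x hx => by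
    linarith [min_le_right N1 (min N2 N3), min_le_right N2 N3]
  obtain ⟨s, hs, h⟩ := exists_hasDerivAt_eq_slope Ψ _ (show t < t + 1 by linarith)
    (fun x hx => (S.dΨ x ((ht1 x hx.2).trans hN1)).continuousAt.continuousWithinAt)
    (fun x hx => S.dΨ x ((ht1 x hx.2.le).trans hN1))
  have hs1 := hs.2.le
  have hs0 : s ≤ N0 := (ht1 s hs1).trans hN1
  have hp := S.pert (by positivity) hs0 (h3 s (ht3 s hs1))
  have a1 := h1 s (ht1 s hs1)
  have a2 := h2 s (ht2 s hs1)
  have hp2 : 1 / (8 * (2 + M)) * (1 + M + |W s| + |Ψ s|) ≤ 1 / 8 := by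
    calc 1 / (8 * (2 + M)) * (1 + M + |W s| + |Ψ s|) ≤ 1 / (8 * (2 + M)) * (2 + M) := by
          exact mul_le_mul_of_nonneg_left (by linarith) (by positivity)
      _ = 1 / 8 := by field_simp
  have b1 := abs_le.1 (h1 t (ht1 t (by linarith)))
  have b2 := abs_le.1 (h1 (t + 1) (ht1 (t + 1) le_rfl))
  have b3 := abs_le.1 (hp.trans hp2)
  rw [add_sub_cancel_left, div_one] at h
  have hΦ : 0 < Φ s := S.hm.trans_le (S.lo s hs0)
  have c1 : 1 / Φ s ^ 3 ≤ 3 / 2 := by linarith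
  have c2 : 1 / 2 ≤ 1 / Φ s ^ 3 := by linarith
  rw [div_le_iff₀ (by positivity)] at c1
  rw [le_div_iff₀ (by positivity)] at c2
  have c3 : 1 / 2 ≤ Φ s := by
    by_contra hc
    push Not at hc
    have := pow_lt_pow_left₀ hc hΦ.le (show (3:ℕ) ≠ 0 by norm_num)
    norm_num at this
    linarith
  have c4 : Φ s ≤ 3 / 2 := by
    by_contra hc
    push Not at hc
    have := pow_lt_pow_left₀ hc (by norm_num) (show (3:ℕ) ≠ 0 by norm_num)
    norm_num at this
    linarith
  have hl := lip_aux (a := t) (b := t + 1) (fun x hx => S.dΦ x ((ht1 x hx.2).trans hN1))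
    (fun x hx => h2 x (ht2 x hx.2)) ⟨hs.1.le, hs.2.le⟩ ⟨le_rfl, by linarith⟩
  have d2 : |t - s| ≤ 1 := by rw [abs_le]; constructor <;> linarith [hs.1, hs.2]
  have d3 : |Φ t - Φ s| ≤ 1 / 8 := by linarith
  have d4 := abs_le.1 d3
  have d5 := h1 t (ht1 t (by linarith))
  have d6 := h2 t (ht2 t (by linarith))
  constructor <;> linarith
end TauSys

structure ASys (a : ℝ) (Φ W Ψ u s : ℝ → ℝ) : Prop where
  upos : ∀ t, 0 < u t
  hsu : ∀ t, s t ^ 2 + u t ^ 18 = 1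
  hdu : ∀ t, HasDerivAt u (-(1 / 9) * s t * u t ^ 18) t
  hds : ∀ t, HasDerivAt s (u t ^ 35) t
  dΦ : ∀ t, HasDerivAt Φ (W t) t
  dW : ∀ t, HasDerivAt W (Ψ t) t
  dΨ : ∀ t, HasDerivAt Ψ (1 / Φ t ^ 3 - 1 - ((a - 1) * u t ^ 18 +
    (((16 / 3) * s t - (224 / 27) * s t ^ 3) * u t ^ 51) * Φ t
      + (((208 / 81) * s t ^ 2 - 10 / 9) * u t ^ 34) * W t
      + ((2 / 3) * s t * u t ^ 17) * Ψ t)) t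
  Φpos : ∀ t, 0 < Φ t
  sbot : Tendsto s atBot (nhds (-1))
  stopp : Tendsto s atTop (nhds 1)

namespace ASys
variable {a : ℝ} {Φ W Ψ u s : ℝ → ℝ}

lemma dH0 (S : ASys a Φ W Ψ u s) (t : ℝ) :
    HasDerivAt (fun t => u t ^ 6 * Φ t)
      (-u t ^ 8 * (-(u t ^ 2)⁻¹ * W t + (2 / 3) * s t * u t ^ 15 * Φ t)) t := by
  have hu := S.upos t
  refine (((S.hdu t).pow 6).mul (S.dΦ t)).congr_deriv ?_
  simp only [Pi.pow_apply]
  field_simp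
  push_cast
  ring

lemma dH1 (S : ASys a Φ W Ψ u s) (t : ℝ) :
    HasDerivAt (fun t => -(u t ^ 2)⁻¹ * W t + (2 / 3) * s t * u t ^ 15 * Φ t)
      (-u t ^ 8 * ((u t ^ 10)⁻¹ * Ψ t - (4 / 9) * s t * u t ^ 7 * W t - (2 / 3) * u t ^ 42 * Φ t
        + (10 / 9) * s t ^ 2 * u t ^ 24 * Φ t)) t := by
  have hu := S.upos t
  have h0 : u t ^ 2 ≠ 0 := by positivity
  refine (((((S.hdu t).pow 2).inv h0).neg.mul (S.dW t)).add
    ((((S.hds t).const_mul (2 / 3)).mul ((S.hdu t).pow 15)).mul (S.dΦ t))).congr_deriv ?_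
  simp only [Pi.pow_apply, Pi.mul_apply, Pi.neg_apply, Pi.inv_apply]
  field_simp
  push_cast
  ring

lemma dH2 (S : ASys a Φ W Ψ u s) (t : ℝ) :
    HasDerivAt (fun t => (u t ^ 10)⁻¹ * Ψ t - (4 / 9) * s t * u t ^ 7 * W t
        - (2 / 3) * u t ^ 42 * Φ t + (10 / 9) * s t ^ 2 * u t ^ 24 * Φ t)
      (-u t ^ 8 * ((s t / u t ^ 9) ^ 2 + a - 1 / (u t ^ 6 * Φ t) ^ 3)) t := by
  have hu := S.upos t
  have hΦ := S.Φpos t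
  have h0 : u t ^ 10 ≠ 0 := by positivity
  refine ((((((S.hdu t).pow 10).inv h0).mul (S.dΨ t)).sub
    ((((S.hds t).const_mul (4 / 9)).mul ((S.hdu t).pow 7)).mul (S.dW t))).sub
    ((((S.hdu t).pow 42).const_mul (2 / 3)).mul (S.dΦ t)) |>.add
    (((((S.hds t).pow 2).const_mul (10 / 9)).mul ((S.hdu t).pow 24)).mul (S.dΦ t))).congr_deriv ?_
  simp only [Pi.pow_apply, Pi.mul_apply, Pi.neg_apply, Pi.inv_apply]
  push_cast
  linear_combination (norm := (field_simp; ring)) ((u t ^ 10)⁻¹ + (16 / 3) * s t * u t ^ 41 * Φ t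
    - (10 / 9) * u t ^ 24 * W t) * S.hsu t

lemma df (S : ASys a Φ W Ψ u s) (t : ℝ) :
    HasDerivAt (fun t => s t / u t ^ 9) (u t ^ 8) t := by
  have hu := S.upos t
  have h0 : u t ^ 9 ≠ 0 := by positivity
  refine ((S.hds t).div ((S.hdu t).pow 9) h0).congr_deriv ?_
  simp only [Pi.pow_apply]
  push_cast
  linear_combination (norm := (field_simp; ring)) u t ^ 8 * S.hsu t

lemma ule (S : ASys a Φ W Ψ u s) (t : ℝ) : u t ≤ 1 := by
  by_contra hc
  push Not at hc
  have := one_lt_pow₀ hc (show (18 : ℕ) ≠ 0 by norm_num)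
  nlinarith [S.hsu t, sq_nonneg (s t)]

lemma u0 (S : ASys a Φ W Ψ u s) {l : Filter ℝ} (h : Tendsto (fun t => s t ^ 2) l (nhds 1)) :
    Tendsto u l (nhds 0) := by
  have h1 : Tendsto (fun t => (1 - s t ^ 2) ^ ((1 : ℝ) / 18)) l (nhds 0) := by
    have := (h.const_sub 1).rpow_const (p := (1 : ℝ) / 18) (Or.inr (by norm_num))
    simpa using this
  refine h1.congr fun t => ?_
  rw [show 1 - s t ^ 2 = u t ^ 18 by linarith [S.hsu t], ← Real.rpow_natCast,
    ← Real.rpow_mul (S.upos t).le]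
  norm_num

lemma ubot (S : ASys a Φ W Ψ u s) : Tendsto u atBot (nhds 0) :=
  S.u0 (by simpa using S.sbot.pow 2)

lemma utop (S : ASys a Φ W Ψ u s) : Tendsto u atTop (nhds 0) :=
  S.u0 (by simpa using S.stopp.pow 2)

lemma u9 (S : ASys a Φ W Ψ u s) {l : Filter ℝ} (h : Tendsto u l (nhds 0)) :
    Tendsto (fun t => (u t ^ 9)⁻¹) l atTop := by
  apply Tendsto.inv_tendsto_nhdsGT_zero
  refine tendsto_nhdsWithin_iff.2 ⟨by simpa using h.pow 9, Eventually.of_forall fun t => ?_⟩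
  have := S.upos t
  exact mem_Ioi.2 (by positivity)

lemma inv (S : ASys a Φ W Ψ u s) :
    ∃ T : ℝ → ℝ, (∀ y, s (T y) / u (T y) ^ 9 = - y) ∧ (∀ t, T (-(s t / u t ^ 9)) = t) ∧
      (∀ y, HasDerivAt T (-(u (T y) ^ 8)⁻¹) y) ∧
      (∀ t y, t ≤ T y → y ≤ -(s t / u t ^ 9)) := by
  set f : ℝ → ℝ := fun t => s t / u t ^ 9 with hf
  have hmono : StrictMono f := strictMono_of_deriv_pos fun t => by
    rw [(S.df t).deriv]; have := S.upos t; positivity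
  have hcont : Continuous f := continuous_iff_continuousAt.2 fun t => (S.df t).continuousAt
  have htop : Tendsto f atTop atTop := by
    simpa [hf, div_eq_mul_inv] using S.stopp.pos_mul_atTop one_pos (S.u9 S.utop)
  have hbot : Tendsto f atBot atBot := by
    simpa [hf, div_eq_mul_inv] using S.sbot.neg_mul_atTop (by norm_num) (S.u9 S.ubot)
  have hsurj := hcont.surjective htop hbot
  set e := hmono.orderIsoOfSurjective f hsurj with he
  have h1 : ∀ y, f (e.symm y) = y := fun y => e.apply_symm_apply y
  have h2 : ∀ t, e.symm (f t) = t := fun t => e.symm_apply_apply t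
  have hd : ∀ y, HasDerivAt e.symm ((u (e.symm y) ^ 8)⁻¹) y := fun y => by
    have := S.upos (e.symm y)
    exact HasDerivAt.of_local_left_inverse (f := f) e.symm.continuous.continuousAt
      (S.df (e.symm y)) (by positivity) (Eventually.of_forall h1)
  refine ⟨fun y => e.symm (-y), fun y => h1 (-y), fun t => ?_, fun y => ?_, fun t y hty => ?_⟩
  · simpa using h2 t
  · refine ((hd (-y)).comp y (hasDerivAt_neg y)).congr_deriv ?_
    ring
  · have := hmono.monotone hty
    rw [h1] at this
    simp only [hf] at this
    linarith
end ASys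


lemma q_exists (a : ℝ) : ∃ x0 : ℝ, ∃ q : ℝ → ℝ, 1 ≤ x0 ∧ (∀ x ≥ x0, 0 < q x) ∧ (∀ x ≥ x0, q x ≤ 1) ∧
    (∀ x ≥ x0, q x ^ 3 * (x ^ 2 + a) = 1) ∧ (∀ x ≥ x0, |a * q x ^ 3| ≤ 1 / 100) ∧
    (∀ x ≥ x0, HasDerivAt q (-(2 / 3) * x * q x ^ 4) x) ∧ Tendsto q atTop (nhds 0) ∧
    (∀ x ≥ x0, ∀ v > 0, v ^ 3 * (x ^ 2 + 1) = 1 → q x ≤ 2 * v ∧ v ≤ 2 * q x) := by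
  set q : ℝ → ℝ := fun x => (x ^ 2 + a) ^ (-(1 / 3) : ℝ) with hq
  have ha := abs_nonneg a
  have hb : ∀ x ≥ 200 * (|a| + 1), 100 * |a| + 100 ≤ x ^ 2 + a ∧ 100 * |a| + 100 ≤ x ^ 2 := by
    intro x hx
    have := neg_abs_le a
    constructor <;> nlinarith
  have hpos : ∀ x ≥ 200 * (|a| + 1), 0 < x ^ 2 + a := fun x hx => by linarith [(hb x hx).1]
  have qpos : ∀ x ≥ 200 * (|a| + 1), 0 < q x := fun x hx => Real.rpow_pos_of_pos (hpos x hx) _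
  have hqn : ∀ x ≥ 200 * (|a| + 1), ∀ n : ℕ, q x ^ n = (x ^ 2 + a) ^ (-(1 / 3) * n : ℝ) := by
    intro x hx n
    rw [hq, ← Real.rpow_natCast, ← Real.rpow_mul (hpos x hx).le]
  have qg : ∀ x ≥ 200 * (|a| + 1), q x ^ 3 * (x ^ 2 + a) = 1 := by
    intro x hx
    rw [hqn x hx, show (-(1 / 3) * (3 : ℕ) : ℝ) = -1 by norm_num, Real.rpow_neg_one]
    exact inv_mul_cancel₀ (hpos x hx).ne'
  refine ⟨200 * (|a| + 1), q, by linarith, qpos, ?_, qg, ?_, ?_, ?_, ?_⟩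
  · intro x hx
    by_contra hc
    push Not at hc
    have := one_lt_pow₀ hc (show (3 : ℕ) ≠ 0 by norm_num)
    nlinarith [qg x hx, hb x hx]
  · intro x hx
    have h3 := pow_pos (qpos x hx) 3
    rw [abs_mul, abs_of_pos h3]
    nlinarith [qg x hx, hb x hx]
  · intro x hx
    have h1 : HasDerivAt (fun x : ℝ => x ^ 2 + a) (2 * x) x := by
      simpa using (hasDerivAt_pow 2 x).add_const a
    refine (h1.rpow_const (p := (-(1 / 3) : ℝ)) (Or.inl (hpos x hx).ne')).congr_deriv ?_
    rw [hqn x hx, show (-(1 / 3) - 1 : ℝ) = -(1 / 3) * (4 : ℕ) by norm_num]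
    ring
  · have h1 : Tendsto (fun x : ℝ => x ^ 2 + a) atTop atTop :=
      tendsto_atTop_add_const_right _ _ (tendsto_pow_atTop (by norm_num))
    exact (tendsto_rpow_neg_atTop (by norm_num : (0 : ℝ) < 1 / 3)).comp h1
  · intro x hx v hv hvx
    have h1 := qg x hx
    have hq0 := qpos x hx
    have h2 := hb x hx
    have h3 := abs_le.1 (le_refl |a|)
    have p1 : 0 < q x ^ 3 := by positivity
    have p2 : 0 < v ^ 3 := by positivity
    constructor
    · by_contra hc
      push Not at hc
      have := pow_lt_pow_left₀ hc (by positivity) (show (3 : ℕ) ≠ 0 by norm_num)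
      rw [mul_pow] at this
      nlinarith [hpos x hx]
    · by_contra hc
      push Not at hc
      have := pow_lt_pow_left₀ hc (by positivity) (show (3 : ℕ) ≠ 0 by norm_num)
      rw [mul_pow] at this
      nlinarith [hpos x hx]

lemma ASys.main {a : ℝ} {Φ W Ψ u s : ℝ → ℝ} (S : ASys a Φ W Ψ u s) {M1 : ℝ}
    (hfr : ∃ᶠ t in atBot, Φ t < M1) :
    ∃ N, ∀ t ≤ N, Φ t + |W t| + |Ψ t| ≤ 3 ∧ 1 / 4 ≤ Φ t := by
  obtain ⟨x0, q, hx0, qpos, qle, qg, qr, qd, q0, qv⟩ := q_exists a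
  obtain ⟨T, hT1, hT2, hT3, hT4⟩ := S.inv
  have hupos := S.upos
  have huy : ∀ y, (u (T y) ^ 6) ^ 3 * (y ^ 2 + 1) = 1 := by
    intro y
    have h := hT1 y
    have hp := hupos (T y)
    have hy : y ^ 2 = (s (T y) / u (T y) ^ 9) ^ 2 := by rw [h]; ring
    rw [hy]
    field_simp
    linear_combination S.hsu (T y)
  have hqu : ∀ x ≥ x0, q x ≤ 2 * u (T x) ^ 6 ∧ u (T x) ^ 6 ≤ 2 * q x := fun x hx =>
    qv x hx _ (pow_pos (hupos _) 6) (huy x)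
  have E : EtaSys a x0 (2 * M1) q (fun y => u (T y) ^ 6 * Φ (T y))
      (fun y => -(u (T y) ^ 2)⁻¹ * W (T y) + (2 / 3) * s (T y) * u (T y) ^ 15 * Φ (T y))
      (fun y => (u (T y) ^ 10)⁻¹ * Ψ (T y) - (4 / 9) * s (T y) * u (T y) ^ 7 * W (T y)
        - (2 / 3) * u (T y) ^ 42 * Φ (T y) + (10 / 9) * s (T y) ^ 2 * u (T y) ^ 24 * Φ (T y)) := by
    refine ⟨hx0, qpos, qle, qg, qr, qd, q0, ?_, ?_, ?_, ?_, ?_⟩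
    · intro x _
      exact mul_pos (pow_pos (hupos _) 6) (S.Φpos _)
    · intro x _
      have hp := hupos (T x)
      refine ((S.dH0 (T x)).comp x (hT3 x)).congr_deriv ?_
      field_simp
    · intro x _
      have hp := hupos (T x)
      refine ((S.dH1 (T x)).comp x (hT3 x)).congr_deriv ?_
      field_simp
    · intro x _
      have hp := hupos (T x)
      refine ((S.dH2 (T x)).comp x (hT3 x)).congr_deriv ?_
      rw [hT1 x]
      field_simp
    · intro y
      obtain ⟨t, ht, htM⟩ := frequently_atBot.1 hfr (T (max y x0))
      have h1 := hT4 t _ ht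
      refine ⟨-(s t / u t ^ 9), (le_max_left _ _).trans h1, ?_⟩
      have h2 := (hqu _ ((le_max_right _ _).trans h1)).2
      rw [hT2] at h2
      simp only [hT2]
      have h3 := S.Φpos t
      have h4 := pow_pos (hupos t) 6
      nlinarith
  obtain ⟨m, hm, M, x2, hx2, hb⟩ := E.bounded
  obtain ⟨N1, hN1⟩ := eventually_atBot.1 (S.sbot.eventually (gt_mem_nhds (show (-1 : ℝ) < -(1 / 2) by norm_num)))
  have hΦb : ∀ t ≤ min N1 (T x2), m / 2 ≤ Φ t ∧ Φ t ≤ 2 * M := by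
    intro t ht
    have h1 := hT4 t _ (ht.trans (min_le_right _ _))
    have h2 := hb _ h1
    have h3 := hqu _ (hx2.le.trans h1)
    have h4 := qpos _ (hx2.le.trans h1)
    simp only [hT2] at h2 h3
    set Q := q (-(s t / u t ^ 9))
    rw [le_div_iff₀ h4, div_le_iff₀ h4] at h2
    have h5 := pow_pos (hupos t) 6
    have h6 := S.Φpos t
    have hMpos : 0 < M := by
      by_contra hc
      push Not at hc
      nlinarith [mul_pos h5 h6]
    constructor
    · by_contra hc
      push Not at hc
      nlinarith
    · by_contra hc
      push Not at hc
      nlinarith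
  have hs1 : ∀ t, |s t| ≤ 1 := fun t => by
    rw [← sq_le_one_iff_abs_le_one]
    have := pow_pos (hupos t) 18
    linarith [S.hsu t]
  have hup : ∀ t, ∀ n, 18 ≤ n → u t ^ n ≤ u t ^ 18 := fun t n hn =>
    pow_le_pow_of_le_one (hupos t).le (S.ule t) hn
  have hC : (0 : ℝ) < |a - 1| + 20 := by positivity
  have hkb : ∀ t n, 18 ≤ n → ∀ c : ℝ, |c| ≤ |a - 1| + 20 → |c * u t ^ n| ≤ (|a - 1| + 20) * u t ^ 18 := by
    intro t n hn c hc
    rw [abs_mul, abs_of_pos (pow_pos (hupos t) n)]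
    exact mul_le_mul hc (hup t n hn) (pow_pos (hupos t) n).le hC.le
  have TS : TauSys (m / 2) (2 * M) (|a - 1| + 20) (min N1 (T x2)) Φ W Ψ u
      (fun t => -(1 / 9) * s t * u t ^ 18) (fun t => (a - 1) * u t ^ 18)
      (fun t => ((16 / 3) * s t - (224 / 27) * s t ^ 3) * u t ^ 51)
      (fun t => ((208 / 81) * s t ^ 2 - 10 / 9) * u t ^ 34)
      (fun t => (2 / 3) * s t * u t ^ 17) := by
    have hs3 : ∀ t, |s t ^ 3| ≤ 1 := fun t => by
      rw [abs_pow]; exact pow_le_one₀ (abs_nonneg _) (hs1 t)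
    have hs2 : ∀ t, |s t ^ 2| ≤ 1 := fun t => by
      rw [abs_pow]; exact pow_le_one₀ (abs_nonneg _) (hs1 t)
    have ha := abs_nonneg (a - 1)
    refine ⟨by positivity, hC, fun t ht => (hΦb t ht).1, fun t ht => (hΦb t ht).2,
      fun t _ => S.dΦ t, fun t _ => S.dW t, fun t _ => S.dΨ t, fun t _ => S.hdu t,
      fun t _ => S.upos t, fun t _ => S.ule t, ?_, S.ubot, ?_, ?_, ?_, ?_⟩
    · intro t ht
      have := hN1 t (ht.trans (min_le_left _ _))
      have := pow_pos (hupos t) 18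
      nlinarith
    · intro t _
      exact hkb t 18 le_rfl _ (by linarith)
    · intro t _
      apply hkb t 51 (by norm_num)
      have h1 := abs_le.1 (hs1 t)
      have h3 := abs_le.1 (hs3 t)
      rw [abs_le]; constructor <;> linarith
    · intro t _
      apply hkb t 34 (by norm_num)
      have h1 := abs_le.1 (hs2 t)
      rw [abs_le]; constructor <;> linarith
    · intro t _
      have h17 : u t ^ 17 ≤ u t ^ 9 := pow_le_pow_of_le_one (hupos t).le (S.ule t) (by norm_num)
      have hp := pow_pos (hupos t) 17
      rw [abs_mul, abs_of_pos hp]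
      have h1 := abs_le.1 (hs1 t)
      have h2 : |2 / 3 * s t| ≤ 1 := by
        rw [abs_le]; constructor <;> linarith
      nlinarith
  exact TS.final

lemma cos_rpow_le {x : ℝ} (hx : 0 ≤ Real.cos x) :
    Real.cos x ^ ((26 : ℝ) / 9) ≤ Real.cos x := by
  have := Real.rpow_le_rpow_of_exponent_ge' hx (Real.cos_le_one x) (by norm_num : (0 : ℝ) ≤ 1)
    (by norm_num : (1 : ℝ) ≤ 26 / 9)
  simpa using this

lemma theta_cos_pos {θ : ℝ → ℝ}
    (hd : ∀ t, HasDerivAt θ (Real.cos (θ t) ^ ((26 : ℝ) / 9)) t)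
    (hI : ∀ t, θ t ∈ Set.Icc (-(Real.pi / 2)) (Real.pi / 2))
    (htop : Tendsto θ atTop (nhds (Real.pi / 2))) (hbot : Tendsto θ atBot (nhds (-(Real.pi / 2))))
    (t : ℝ) : 0 < Real.cos (θ t) := by
  have hpi := Real.pi_pos
  have hc : ∀ t, 0 ≤ Real.cos (θ t) := fun t => Real.cos_nonneg_of_mem_Icc (hI t)
  have h1 : ∀ t, Real.cos (θ t) ^ ((26 : ℝ) / 9) ≤ θ t + Real.pi / 2 := fun t => by
    refine (cos_rpow_le (hc t)).trans ?_
    rw [← Real.sin_add_pi_div_two]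
    exact Real.sin_le (by linarith [(hI t).1])
  have h2 : ∀ t, Real.cos (θ t) ^ ((26 : ℝ) / 9) ≤ Real.pi / 2 - θ t := fun t => by
    refine (cos_rpow_le (hc t)).trans ?_
    rw [← Real.sin_pi_div_two_sub]
    exact Real.sin_le (by linarith [(hI t).2])
  apply Real.cos_pos_of_mem_Ioo
  constructor
  · by_contra hcon
    push Not at hcon
    obtain ⟨N, hN⟩ := eventually_atTop.1 (htop.eventually (lt_mem_nhds (show 0 < Real.pi / 2 by linarith)))
    have := anti_aux (f := fun x => (θ x + Real.pi / 2) * Real.exp (-x)) (le_max_left t N)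
      (fun x _ => ((hd x).add_const (Real.pi / 2)).mul ((hasDerivAt_neg x).exp))
      (fun x _ => by nlinarith [Real.exp_pos (-x), h1 x])
    have e1 := hN _ (le_max_right t N)
    have e2 := Real.exp_pos (-(max t N))
    have e3 := Real.exp_pos (-t)
    have e4 : 0 < (θ (max t N) + Real.pi / 2) * Real.exp (-(max t N)) :=
      mul_pos (by linarith) e2
    nlinarith
  · by_contra hcon
    push Not at hcon
    obtain ⟨N, hN⟩ := eventually_atBot.1 (hbot.eventually (gt_mem_nhds (show -(Real.pi / 2) < 0 by linarith)))
    have := mono_aux (f := fun x => (Real.pi / 2 - θ x) * Real.exp x) (min_le_left t N)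
      (fun x _ => ((hd x).const_sub (Real.pi / 2)).mul (Real.hasDerivAt_exp x))
      (fun x _ => by nlinarith [Real.exp_pos x, h2 x])
    have e1 := hN _ (min_le_right t N)
    have e2 := Real.exp_pos (min t N)
    have e3 := Real.exp_pos t
    have e4 : 0 < (Real.pi / 2 - θ (min t N)) * Real.exp (min t N) :=
      mul_pos (by linarith) e2
    nlinarith

lemma asys_of_sol {a : ℝ} {Φ W Ψ θ : ℝ → ℝ} (hS : SolD a Φ W Ψ θ) (hΦ : ∀ τ : ℝ, 0 < Φ τ)
    (hI : ∀ t, θ t ∈ Set.Icc (-(Real.pi / 2)) (Real.pi / 2))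
    (htop : Tendsto θ atTop (nhds (Real.pi / 2)))
    (hbot : Tendsto θ atBot (nhds (-(Real.pi / 2)))) :
    ASys a Φ W Ψ (fun t => Real.cos (θ t) ^ ((1 : ℝ) / 9)) (fun t => Real.sin (θ t)) := by
  have hc := theta_cos_pos (fun t => (hS t).2.2.2) hI htop hbot
  have hp : ∀ t (n : ℕ), (Real.cos (θ t) ^ ((1 : ℝ) / 9)) ^ n = Real.cos (θ t) ^ ((n : ℝ) / 9) := by
    intro t n
    rw [← Real.rpow_natCast, ← Real.rpow_mul (hc t).le]
    congr 1; ring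
  have h9 : ∀ t (n : ℕ), Real.cos (θ t) ^ n = (Real.cos (θ t) ^ ((1 : ℝ) / 9)) ^ (9 * n) := by
    intro t n
    rw [hp, ← Real.rpow_natCast]
    congr 1; push_cast; ring
  have h26 : ∀ t, Real.cos (θ t) ^ ((26 : ℝ) / 9) = (Real.cos (θ t) ^ ((1 : ℝ) / 9)) ^ 26 := fun t => by
    rw [hp]; norm_num
  refine ⟨fun t => Real.rpow_pos_of_pos (hc t) _, fun t => ?_, fun t => ?_, fun t => ?_,
    fun t => (hS t).1, fun t => (hS t).2.1, fun t => ?_, hΦ, ?_, ?_⟩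
  · have := Real.sin_sq_add_cos_sq (θ t)
    rwa [h9 t 2] at this
  · have hd := (hS t).2.2.2
    refine (hd.cos.rpow_const (p := (1 : ℝ) / 9) (Or.inl (hc t).ne')).congr_deriv ?_
    have e1 : Real.cos (θ t) ^ ((26 : ℝ) / 9) * Real.cos (θ t) ^ ((1 : ℝ) / 9 - 1) =
      (Real.cos (θ t) ^ ((1 : ℝ) / 9)) ^ 18 := by
      rw [hp, ← Real.rpow_add (hc t)]; norm_num
    rw [← e1]; ring
  · refine ((hS t).2.2.2).sin.congr_deriv ?_
    have := h9 t 1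
    rw [pow_one] at this
    set w := Real.cos (θ t) ^ ((1 : ℝ) / 9) with hw
    rw [h26, ← hw]
    linear_combination w ^ 26 * this
  · refine ((hS t).2.2.1).congr_deriv ?_
    have e51 : Real.cos (θ t) ^ ((17 : ℝ) / 3) = (Real.cos (θ t) ^ ((1 : ℝ) / 9)) ^ 51 := by
      rw [hp]; norm_num
    have e34 : Real.cos (θ t) ^ ((34 : ℝ) / 9) = (Real.cos (θ t) ^ ((1 : ℝ) / 9)) ^ 34 := by
      rw [hp]; norm_num
    have e17 : Real.cos (θ t) ^ ((17 : ℝ) / 9) = (Real.cos (θ t) ^ ((1 : ℝ) / 9)) ^ 17 := by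
      rw [hp]; norm_num
    rw [dPsi, e51, e34, e17, h9 t 2]
    ring
  · have := (Real.continuous_sin.tendsto _).comp hbot
    simpa [Function.comp_def] using this
  · have := (Real.continuous_sin.tendsto _).comp htop
    simpa [Function.comp_def] using this

/-- uniform control of the oscillations.  There are constants `C₁, C₂ > 0`
depending only on `a` such that every global solution of system (D) converging to `p₊`
as `τ → +∞`, with `θ → -π/2` as `τ → -∞` and `liminf_{τ→-∞} Φ < ∞`, satisfies
`limsup_{τ→-∞} (Φ + |W| + |Ψ|) ≤ C₁` and `liminf_{τ→-∞} Φ ≥ C₂`. -/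
theorem control_of_oscillations (a : ℝ) :
    ∃ C₁ > (0 : ℝ), ∃ C₂ > (0 : ℝ), ∀ Φ W Ψ θ : ℝ → ℝ,
      SolD a Φ W Ψ θ →
      (∀ τ : ℝ, 0 < Φ τ) →
      (∀ τ : ℝ, θ τ ∈ Set.Icc (-(Real.pi / 2)) (Real.pi / 2)) →
      Tendsto (fun τ => (Φ τ, W τ, Ψ τ, θ τ)) atTop
        (nhds ((1 : ℝ), (0 : ℝ), (0 : ℝ), Real.pi / 2)) →
      Tendsto θ atBot (nhds (-(Real.pi / 2))) →
      Filter.liminf (fun τ : ℝ => ((Φ τ : ℝ) : EReal)) atBot < ⊤ →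
      (Filter.limsup (fun τ : ℝ => ((Φ τ + |W τ| + |Ψ τ| : ℝ) : EReal)) atBot ≤ (C₁ : EReal) ∧
        (C₂ : EReal) ≤ Filter.liminf (fun τ : ℝ => ((Φ τ : ℝ) : EReal)) atBot) := by
  refine ⟨3, by norm_num, 1 / 4, by norm_num, ?_⟩
  intro Φ W Ψ θ hS hΦ hI hlim hbot hinf
  have htop : Tendsto θ atTop (nhds (Real.pi / 2)) :=
    (((continuous_snd.comp continuous_snd).comp continuous_snd).tendsto _).comp hlim
  have S := asys_of_sol hS hΦ hI htop hbot
  obtain ⟨M1, hM1, _⟩ := EReal.lt_iff_exists_real_btwn.1 hinf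
  have hfr : ∃ᶠ t in atBot, Φ t < M1 :=
    (frequently_lt_of_liminf_lt (by isBoundedDefault) hM1).mono fun t ht => EReal.coe_lt_coe_iff.1 ht
  obtain ⟨N, hN⟩ := S.main hfr
  constructor
  · refine limsup_le_of_le (by isBoundedDefault) ?_
    filter_upwards [eventually_le_atBot N] with t ht
    exact EReal.coe_le_coe_iff.2 (hN t ht).1
  · refine le_liminf_of_le (by isBoundedDefault) ?_
    filter_upwards [eventually_le_atBot N] with t ht
    exact EReal.coe_le_coe_iff.2 (hN t ht).2
end

section
/- Let M > 0 and consider P(Z; M, β) = (Z−1)³·(Z²+3Z+6)/60 + (M/9)·(5Z²−16Z+20) + (β/2)·(Z−1)² as a polynomial in Z ∈ ℝ with parameter β ∈ ℝ. Then there exists β*(M) < 0 such that: (i) if β > β*(M), then P(Z; M, β) > 0 for all Z ≥ 1; (ii) if β < β*(M), then there exists a unique Z_r > 1 such that P(Z; M, β) > 0 for 1 ≤ Z < Z_r, P(Z_r; M, β) = 0, and ∂P/∂Z(Z_r; M, β) < 0; (iii) if β = β*(M), then there exists Z*(M) > 1 such that P(Z*(M); M, β) = 0 and ∂P/∂Z(Z*(M);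 M, β) = 0 (a double zero), and P(Z; M, β) > 0 for all Z ≥ 1 with Z ≠ Z*(M). -/
/-- The fifth-order polynomial `P(Z; M, β)` solving `P''' = Z²` with `P(1; M, β) = M`. -/
noncomputable def P (M β Z : ℝ) : ℝ :=
  (Z - 1) ^ 3 * (Z ^ 2 + 3 * Z + 6) / 60 + (M / 9) * (5 * Z ^ 2 - 16 * Z + 20)
    + (β / 2) * (Z - 1) ^ 2

noncomputable def gg (M s : ℝ) : ℝ :=
  (s ^ 3 + 5 * s ^ 2 + 10 * s) / 60 + M / 9 * (5 - 6 * s⁻¹ + 9 * (s⁻¹) ^ 2)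

noncomputable def kk (M s : ℝ) : ℝ :=
  s ^ 3 * (3 * s ^ 2 + 10 * s + 10) / 60 + 2 * M / 3 * (s - 3)

lemma P_eq (M β s : ℝ) (hs : 0 < s) : P M β (1 + s) = s ^ 2 * (gg M s + β / 2) := by
  unfold P gg
  field_simp
  ring

lemma P_one (M β : ℝ) : P M β 1 = M := by
  unfold P
  ring

lemma P_deriv (M β s : ℝ) : s * deriv (P M β) (1 + s) = 2 * P M β (1 + s) + kk M s := by
  have h : HasDerivAt (P M β)
      ((3 * (1 + s - 1) ^ 2 * ((1 + s) ^ 2 + 3 * (1 + s) + 6)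
        + (1 + s - 1) ^ 3 * (2 * (1 + s) + 3)) / 60 + (M / 9) * (10 * (1 + s) - 16)
        + (β / 2) * (2 * (1 + s - 1))) (1 + s) := by
    have h1 := (hasDerivAt_id (1 + s))
    have h2 := h1.sub_const 1
    have := ((((h2.pow 3).mul (((h1.pow 2).add (h1.const_mul 3)).add_const 6)).div_const 60).add
      (((((h1.pow 2).const_mul 5).sub (h1.const_mul 16)).add_const 20).const_mul (M / 9))).add
      ((h2.pow 2).const_mul (β / 2))
    refine HasDerivAt.congr_deriv (f := P M β) this ?_
    simp [-mul_eq_mul_left_iff]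
    ring
  rw [h.deriv]
  unfold P kk
  ring

lemma gg_deriv (M s : ℝ) (hs : 0 < s) : HasDerivAt (gg M) (kk M s / s ^ 3) s := by
  have h1 := hasDerivAt_id s
  have h2 := hasDerivAt_inv hs.ne'
  have := ((((h1.pow 3).add ((h1.pow 2).const_mul 5)).add (h1.const_mul 10)).div_const 60).add
    ((((h2.const_mul 6).const_sub 5).add ((h2.pow 2).const_mul 9)).const_mul (M / 9))
  refine HasDerivAt.congr_deriv (f := gg M) this ?_
  unfold kk
  simp
  field_simp
  ring

lemma kk_mono (M : ℝ) (hM : 0 < M) {a b : ℝ} (ha : 0 ≤ a) (hab : a < b) : kk M a < kk M b := by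
  unfold kk
  have hb : 0 ≤ b := ha.trans hab.le
  have h1 : a ^ 3 * (3 * a ^ 2 + 10 * a + 10) ≤ b ^ 3 * (3 * b ^ 2 + 10 * b + 10) := by
    gcongr
  have h2 : 2 * M / 3 * (a - 3) < 2 * M / 3 * (b - 3) := by gcongr
  linarith

/-- for every `M > 0` there exists `β*(M) < 0` such that `P(·; M, β)` is
positive on `[1, ∞)` for `β > β*(M)`, has a unique simple zero (with the stated properties)
for `β < β*(M)`, and has a double zero at some `Z*(M) > 1` for `β = β*(M)`. -/
theorem exists_critical_beta (M : ℝ) (hM : 0 < M) :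
    ∃ βstar : ℝ, βstar < 0 ∧
      (∀ β : ℝ, βstar < β → ∀ Z : ℝ, 1 ≤ Z → 0 < P M β Z) ∧
      (∀ β : ℝ, β < βstar → ∃! Zr : ℝ, 1 < Zr ∧
        (∀ Z : ℝ, 1 ≤ Z → Z < Zr → 0 < P M β Z) ∧
        P M β Zr = 0 ∧ deriv (P M β) Zr < 0) ∧
      (∃ Zstar : ℝ, 1 < Zstar ∧ P M βstar Zstar = 0 ∧ deriv (P M βstar) Zstar = 0 ∧
        ∀ Z : ℝ, 1 ≤ Z → Z ≠ Zstar → 0 < P M βstar Z) := by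
  obtain ⟨t, ht, hkt⟩ : ∃ t ∈ Set.Ioo (0 : ℝ) 3, kk M t = 0 := by
    have hc : ContinuousOn (kk M) (Set.Icc 0 3) := by unfold kk; fun_prop
    exact intermediate_value_Ioo (by norm_num) hc
      ⟨by unfold kk; linarith, by unfold kk; norm_num⟩
  have ht0 : 0 < t := ht.1
  have hcg : ∀ s : ℝ, 0 < s → ContinuousAt (gg M) s := fun s hs => (gg_deriv M s hs).continuousAt
  have hanti : StrictAntiOn (gg M) (Set.Ioc 0 t) := by
    apply strictAntiOn_of_deriv_neg (convex_Ioc 0 t)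
      (fun s hs => (hcg s hs.1).continuousWithinAt)
    intro s hs
    rw [interior_Ioc] at hs
    rw [(gg_deriv M s hs.1).deriv]
    have := kk_mono M hM hs.1.le hs.2
    exact div_neg_of_neg_of_pos (by linarith) (pow_pos hs.1 3)
  have hmono : StrictMonoOn (gg M) (Set.Ici t) := by
    apply strictMonoOn_of_deriv_pos (convex_Ici t)
      (fun s hs => (hcg s (ht0.trans_le hs)).continuousWithinAt)
    intro s hs
    rw [interior_Ici] at hs
    have hs' : t < s := hs
    rw [(gg_deriv M s (ht0.trans hs')).deriv]
    have := kk_mono M hM ht0.le hs'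
    exact div_pos (by linarith) (pow_pos (ht0.trans hs') 3)
  have hmin : ∀ s, 0 < s → s ≠ t → gg M t < gg M s := by
    intro s hs hne
    rcases lt_or_gt_of_ne hne with h | h
    · exact hanti ⟨hs, h.le⟩ ⟨ht0, le_rfl⟩ h
    · exact hmono (Set.mem_Ici.2 le_rfl) (Set.mem_Ici.2 h.le) h
  have hgt : 0 < gg M t := by
    unfold gg
    have : 0 < 5 - 6 * t⁻¹ + 9 * (t⁻¹) ^ 2 := by nlinarith [sq_nonneg (3 * t⁻¹ - 1)]
    positivity
  have hPt : P M (-2 * gg M t) (1 + t) = 0 := by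
    rw [P_eq _ _ _ ht0]; ring
  refine ⟨-2 * gg M t, by linarith, ?_, ?_, 1 + t, by linarith, hPt, ?_, ?_⟩
  · intro β hβ Z hZ
    rcases hZ.eq_or_lt with rfl | hZ
    · rw [P_one]; exact hM
    · obtain ⟨s, rfl⟩ : ∃ s, Z = 1 + s := ⟨Z - 1, by ring⟩
      have hs : 0 < s := by linarith
      rw [P_eq _ _ _ hs]
      have : gg M t ≤ gg M s := by
        by_cases h : s = t
        · rw [h]
        · exact (hmin s hs h).le
      exact mul_pos (by positivity) (by linarith)
  · intro β hβ
    have hneg : P M β (1 + t) < 0 := by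
      rw [P_eq _ _ _ ht0]
      exact mul_neg_of_pos_of_neg (by positivity) (by linarith)
    obtain ⟨Z, hZ, hPZ⟩ : ∃ Z ∈ Set.Ioo (1 : ℝ) (1 + t), P M β Z = 0 := by
      have hc : ContinuousOn (P M β) (Set.Icc 1 (1 + t)) := by unfold P; fun_prop
      exact intermediate_value_Ioo' (by linarith) hc ⟨hneg, by rw [P_one]; exact hM⟩
    obtain ⟨r, rfl⟩ : ∃ r, Z = 1 + r := ⟨Z - 1, by ring⟩
    have hr0 : 0 < r := by linarith [hZ.1]
    have hrt : r < t := by linarith [hZ.2]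
    refine ⟨1 + r, ⟨hZ.1, ?_, hPZ, ?_⟩, ?_⟩
    · intro Y hY hYr
      rcases hY.eq_or_lt with rfl | hY
      · rw [P_one]; exact hM
      · obtain ⟨s, rfl⟩ : ∃ s, Y = 1 + s := ⟨Y - 1, by ring⟩
        have hs : 0 < s := by linarith
        have hsr : s < r := by linarith
        have h1 := hanti ⟨hs, (hsr.trans hrt).le⟩ ⟨hr0, hrt.le⟩ hsr
        rw [P_eq _ _ _ hr0] at hPZ
        have h2 := (mul_eq_zero.1 hPZ).resolve_left (by positivity)
        rw [P_eq _ _ _ hs]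
        exact mul_pos (by positivity) (by linarith)
    · have h1 := P_deriv M β r
      have h2 := kk_mono M hM hr0.le hrt
      by_contra! h3
      have := mul_nonneg hr0.le h3
      linarith
    · rintro Y ⟨hY1, hY2, hY3, -⟩
      rcases lt_trichotomy Y (1 + r) with h | h | h
      · exfalso
        obtain ⟨s, rfl⟩ : ∃ s, Y = 1 + s := ⟨Y - 1, by ring⟩
        have hs : 0 < s := by linarith
        have hsr : s < r := by linarith
        have h1 := hanti ⟨hs, (hsr.trans hrt).le⟩ ⟨hr0, hrt.le⟩ hsr
        rw [P_eq _ _ _ hr0] at hPZ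
        rw [P_eq _ _ _ hs] at hY3
        have h2 := (mul_eq_zero.1 hPZ).resolve_left (by positivity)
        have h3 := (mul_eq_zero.1 hY3).resolve_left (by positivity)
        linarith
      · exact h
      · exact absurd (hY2 _ hZ.1.le h) (by rw [hPZ]; exact lt_irrefl 0)
  · have h1 := P_deriv M (-2 * gg M t) t
    rw [hPt, hkt] at h1
    have : t * deriv (P M (-2 * gg M t)) (1 + t) = 0 := by linarith
    exact (mul_eq_zero.1 this).resolve_left ht0.ne'
  · intro Z hZ hne
    rcases hZ.eq_or_lt with rfl | hZ
    · rw [P_one]; exact hM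
    · obtain ⟨s, rfl⟩ : ∃ s, Z = 1 + s := ⟨Z - 1, by ring⟩
      have hs : 0 < s := by linarith
      rw [P_eq _ _ _ hs]
      have := hmin s hs (fun h => hne (by rw [h]))
      exact mul_pos (by positivity) (by linarith)
end
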